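/- arXiv:2605.15992 — 2 statements merged into one kernel-verified Lean document; each statement's English description precedes it below -/
import Mathlib

section
/- Let S be a polynomial ring over a field k, and let ℓ, ℓ', ℓ'', a_1, …, a_n, b_1, …, b_n, c_1, …, c_n be linearly independent linear forms in S. Set f_i = a_i ℓ + b_i ℓ' + c_i ℓ'' for 1 ≤ i ≤ n, and I = (f_1, …, f_n). Then pd_S(S/I) = n. -/
open CategoryTheory Opposite

universe u

/-- The height of an ideal: the infimum of the heights (in the prime spectrum,
ordered by inclusion) of the primes containing it. -/
noncomputable def Ideal.heightENat {R : Type u} [CommRing R] (I : Ideal R) : ℕ∞ :=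
  ⨅ (p : PrimeSpectrum R) (_ : I ≤ p.asIdeal), Order.height p

/-- The projective dimension of an `R`-module `M`: the least `n` such that
`Ext^i(M, N) = 0` for all `i > n` and all modules `N` (and `⊤` if no such `n` exists). -/
noncomputable def projDim (R : Type u) [CommRing R] (M : Type u) [AddCommGroup M]
    [Module R M] : ℕ∞ :=
  sInf ((↑) '' {n : ℕ | ∀ i : ℕ, n < i → ∀ N : ModuleCat.{u} R,
    Subsingleton (((Ext R (ModuleCat.{u} R) i).obj (op (ModuleCat.of R M))).obj N)})

/-- The Hilbert function of the standard graded ring `S/J`, where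
`S = k[x_1, ..., x_N]`: the `k`-dimension of the degree-`d` graded piece of `S/J`. -/
noncomputable def hilbertFunction (k : Type u) [Field k] {N : ℕ}
    (J : Ideal (MvPolynomial (Fin N) k)) (d : ℕ) : ℕ :=
  Module.finrank k (Submodule.map (Ideal.Quotient.mkₐ k J).toLinearMap
    (MvPolynomial.homogeneousSubmodule (Fin N) k d))

open scoped Classical in
/-- The Hilbert–Samuel multiplicity `e(S/J)` of the graded ring `S/J`:
`(deg P)!` times the leading coefficient of the Hilbert polynomial `P` of `S/J`,
i.e. of the polynomial agreeing with the Hilbert function in all large degrees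
(the degree of the Hilbert polynomial being `dim(S/J) - 1`). -/
noncomputable def hilbertSamuelMultiplicity (k : Type u) [Field k] {N : ℕ}
    (J : Ideal (MvPolynomial (Fin N) k)) : ℚ :=
  if h : ∃ P : Polynomial ℚ, ∀ᶠ d : ℕ in Filter.atTop,
      (hilbertFunction k J d : ℚ) = P.eval (d : ℚ)
  then (h.choose.natDegree).factorial * h.choose.leadingCoeff
  else 0

/-!
Let `X` be the matrix with rows `(a i, b i, c i)` and `y = (l, l', l'')`. As the entries of `X` and
`y` are linearly independent linear forms, the ring is a polynomial ring in these entries over a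
subring, and `I` is generated by the entries of `X *ᵥ y`.

Lower bound: localize at a prime containing the entries of `X` but none of the `y t`. There the
generators lie in the maximal ideal and form a regular sequence, because each is linear, with unit
coefficient, in a variable of its own; a regular sequence of length `n` has projective
dimension `n`.

Upper bound: induct on the number of rows, with `J` the ideal of all rows but the first, and add the
terms of `∑ t, X 0 t * y t` one at a time. After inverting `X 0 s`, a partial sum containing
`X 0 s * y s` becomes a pivot eliminating `y s`, which leaves a generic matrix with one column
fewer. Inverting costs nothing: `X 0 s` is regular modulo `J` and the partial sum, which follows
from the fact that the colon ideals `J : y t` all agree, so the Auslander–Buchsbaum equality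
`pd (R ⧸ (K, x)) = pd (R ⧸ K) + 1` at the primes containing `X 0 s` reduces those to the previous
partial sum. A sum with a single term `X 0 s * y s` is treated by the colon sequence of `X 0 s`.
-/

/-! ### Projective dimension of cyclic modules -/

section QuotientPD

open scoped Pointwise

/-- The projective dimension of the cyclic module `R ⧸ K`, with the value `⊥` when `K = ⊤`. -/
noncomputable abbrev quotientPD {R : Type u} [CommRing R] (K : Ideal R) : WithBot ℕ∞ :=
  projectiveDimension (ModuleCat.of R (R ⧸ K))

variable {R : Type u} [CommRing R]

theorem quotientPD_bot [Nontrivial R] : quotientPD (⊥ : Ideal R) = 0 := by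
  rw [← ModuleCat.projectiveDimension_eq_zero_of_projective (ModuleCat.of R R)]
  exact ModuleCat.projectiveDimension_eq_of_linearEquiv (Submodule.quotEquivOfEqBot ⊥ rfl)

theorem quotientPD_bot_le : quotientPD (⊥ : Ideal R) ≤ 0 := by
  cases subsingleton_or_nontrivial R
  · exact (ModuleCat.isZero_iff_subsingleton.2 inferInstance |>
      (projectiveDimension_eq_bot_iff _).2).le.trans bot_le
  · exact quotientPD_bot.le

attribute [local instance] RingHomInvPair.of_ringEquiv in
theorem quotientPD_map_ringEquiv {T : Type u} [CommRing T] (e : R ≃+* T) (K : Ideal R) :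
    quotientPD (K.map (e : R →+* T)) = quotientPD K := by
  let eQuot : R ⧸ K ≃+* T ⧸ K.map (e : R →+* T) := Ideal.quotientEquiv K _ e rfl
  have hQuot (r : R) (m : R ⧸ K) : eQuot (r • m) = e r • eQuot m := by
    rw [Algebra.smul_def, Algebra.smul_def, map_mul]
    rfl
  let eSemi : (R ⧸ K) ≃ₛₗ[RingHomClass.toRingHom e] (T ⧸ K.map (e : R →+* T)) :=
    { eQuot.toAddEquiv with map_smul' := hQuot }
  exact (ModuleCat.projectiveDimension_eq_of_semiLinearEquiv
    (M := ModuleCat.of R (R ⧸ K)) (N := ModuleCat.of T (T ⧸ K.map (e : R →+* T))) e eSemi).symm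

/-- Localization commutes with passing to the quotient by an ideal. -/
noncomputable def localizedModuleQuotientEquiv (M : Submonoid R) (K : Ideal R) :
    (ModuleCat.of R (R ⧸ K)).localizedModule M ≃ₗ[Localization M]
      Localization M ⧸ K.map (algebraMap R (Localization M)) :=
  let f := (ModuleCat.of R (R ⧸ K)).localizedModuleMkLinearMap M
  have : IsLocalizedModule M f := ModuleCat.localizedModule_isLocalizedModule _ M
  LinearEquiv.extendScalarsOfIsLocalization M (Localization M) <|
    (IsLocalizedModule.linearEquiv M f
      (K.toLocalizedQuotient' (Localization M) M (Algebra.linearMap R (Localization M)))).trans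
    ((Submodule.quotEquivOfEq _ _ (Ideal.localized'_eq_map _ M K)).restrictScalars R)

theorem quotientPD_map_localization_le (M : Submonoid R) (K : Ideal R) :
    quotientPD (K.map (algebraMap R (Localization M))) ≤ quotientPD K := by
  rw [quotientPD, ← ModuleCat.projectiveDimension_eq_of_linearEquiv
    (M := (ModuleCat.of R (R ⧸ K)).localizedModule M) (localizedModuleQuotientEquiv M K)]
  exact ModuleCat.projectiveDimension_le_projectiveDimension_of_isLocalizedModule M _

theorem quotientPD_map_le (M : Submonoid R) {T : Type u} [CommRing T] [Algebra R T]
    [IsLocalization M T] (K : Ideal R) :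
    quotientPD (K.map (algebraMap R T)) ≤ quotientPD K := by
  let e : Localization M ≃+* T := (IsLocalization.algEquiv M (Localization M) T).toRingEquiv
  have he : (e : Localization M →+* T).comp (algebraMap R (Localization M)) = algebraMap R T :=
    (IsLocalization.algEquiv M (Localization M) T).toAlgHom.comp_algebraMap
  rw [← he, ← Ideal.map_map, quotientPD_map_ringEquiv]
  exact quotientPD_map_localization_le M K

theorem quotientPD_le_of_forall_prime [IsNoetherianRing R] {K : Ideal R} {n : ℕ}
    (h : ∀ (p : Ideal R) [p.IsPrime],
      quotientPD (K.map (algebraMap R (Localization.AtPrime p))) ≤ n) :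
    quotientPD K ≤ n := by
  rw [projectiveDimension_le_iff, ModuleCat.hasProjectiveDimensionLE_iff_forall_primeSpectrum]
  intro p
  rw [← projectiveDimension_le_iff, ModuleCat.projectiveDimension_eq_of_linearEquiv
    (N := ModuleCat.of _ _) (localizedModuleQuotientEquiv p.asIdeal.primeCompl K)]
  exact h p.asIdeal

theorem quotientPD_sup_span_singleton_of_mem_maximalIdeal [IsLocalRing R] [IsNoetherianRing R]
    {K : Ideal R} {z : R} (hz : z ∈ IsLocalRing.maximalIdeal R) (hreg : IsSMulRegular (R ⧸ K) z) :
    quotientPD (K ⊔ Ideal.span {z}) = quotientPD K + 1 := by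
  have hz' : z • (⊤ : Submodule R (R ⧸ K)) =
      Submodule.map K.mkQ (Ideal.span {z}) := by
    rw [← Submodule.range_mkQ K, ← Submodule.map_top, ← Submodule.map_pointwise_smul,
      ← Submodule.ideal_span_singleton_smul, smul_eq_mul, Ideal.mul_top]
  let e : QuotSMulTop z (R ⧸ K) ≃ₗ[R] R ⧸ (K ⊔ Ideal.span {z}) :=
    (Submodule.quotEquivOfEq _ _ hz').trans
      (Submodule.quotientQuotientEquivQuotientSup K (Ideal.span {z}))
  rw [← ModuleCat.projectiveDimension_quotSMulTop_eq_succ_of_isSMulRegular _ z hreg hz]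
  exact ModuleCat.projectiveDimension_eq_of_linearEquiv e.symm

theorem isSMulRegular_quotient_map {T : Type*} [CommRing T] [Algebra R T] (M : Submonoid R)
    [IsLocalization M T] {K : Ideal R} {x : R} (hx : ∀ q, x * q ∈ K → ∃ a ∈ M, a * q ∈ K) :
    IsSMulRegular (T ⧸ K.map (algebraMap R T)) (algebraMap R T x) := by
  refine (isSMulRegular_quotient_iff_mem_of_smul_mem _ _).2 fun t ht => ?_
  obtain ⟨⟨q, a⟩, hqa⟩ := IsLocalization.surj M t
  have hxq : algebraMap R T (x * q) ∈ K.map (algebraMap R T) := by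
    rw [map_mul, ← hqa, ← mul_assoc]
    exact Ideal.mul_mem_right _ _ ht
  obtain ⟨b, hb, hbq⟩ := (IsLocalization.algebraMap_mem_map_algebraMap_iff M T K _).1 hxq
  obtain ⟨b', hb', hq⟩ := hx (b * q) (by rwa [mul_left_comm])
  have hta : t * algebraMap R T a ∈ K.map (algebraMap R T) := by
    rw [hqa]
    exact (IsLocalization.algebraMap_mem_map_algebraMap_iff M T K q).2
      ⟨_, mul_mem hb' hb, by rwa [mul_assoc]⟩
  exact (Ideal.mul_unit_mem_iff_mem _ (IsLocalization.map_units T a)).1 hta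

theorem mem_of_algebraMap_mem_map {I : Ideal R} {x : R} (hx : IsSMulRegular (R ⧸ I) x) {q : R}
    (hq : algebraMap R (Localization.Away x) q ∈ I.map (algebraMap R (Localization.Away x))) :
    q ∈ I := by
  obtain ⟨_, ⟨k, rfl⟩, hk⟩ :=
    (IsLocalization.algebraMap_mem_map_algebraMap_iff (Submonoid.powers x) _ I q).1 hq
  exact (isSMulRegular_quotient_iff_mem_of_smul_mem I (x ^ k)).1 (hx.pow k) q hk

theorem quotientPD_le_of_away [IsNoetherianRing R] {K : Ideal R} {x : R} {n : ℕ}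
    (hx : IsSMulRegular (R ⧸ K) x) (hsup : quotientPD (K ⊔ Ideal.span {x}) ≤ n + 1)
    (haway : quotientPD (K.map (algebraMap R (Localization.Away x))) ≤ n) :
    quotientPD K ≤ n := by
  refine quotientPD_le_of_forall_prime fun p _ => ?_
  by_cases hxp : x ∈ p
  · have hreg : IsSMulRegular (_ ⧸ K.map (algebraMap R (Localization.AtPrime p)))
        (algebraMap R (Localization.AtPrime p) x) :=
      isSMulRegular_quotient_map p.primeCompl fun q hq => ⟨1, one_mem _, by
        rw [one_mul]
        exact (isSMulRegular_quotient_iff_mem_of_smul_mem K x).1 hx q hq⟩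
    rw [← ENat.WithBot.add_le_add_one_right_iff,
      ← quotientPD_sup_span_singleton_of_mem_maximalIdeal
        ((IsLocalization.AtPrime.to_map_mem_maximal_iff _ p x).2 hxp) hreg,
      ← Set.image_singleton, ← Ideal.map_span, ← Ideal.map_sup]
    exact (quotientPD_map_le p.primeCompl _).trans hsup
  · have hle : Submonoid.powers x ≤ p.primeCompl := Submonoid.powers_le.2 hxp
    let := IsLocalization.localizationAlgebraOfSubmonoidLe (Localization.Away x)
      (Localization.AtPrime p) _ _ hle
    have := IsLocalization.localization_isScalarTower_of_submonoid_le (Localization.Away x)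
      (Localization.AtPrime p) _ _ hle
    have := IsLocalization.isLocalization_of_submonoid_le (Localization.Away x)
      (Localization.AtPrime p) _ _ hle
    rw [IsScalarTower.algebraMap_eq R (Localization.Away x), ← Ideal.map_map]
    exact (quotientPD_map_le (p.primeCompl.map (algebraMap R (Localization.Away x))) _).trans haway

section ColonSequence

variable {K : Ideal R} {x : R}

theorem colon_singleton_eq_comap_mulLeft (K : Ideal R) (x : R) :
    K.colon {x} = Submodule.comap (LinearMap.mulLeft R x) K :=
  Submodule.ext fun p => by simp [Submodule.mem_colon_singleton, mul_comm]

/-- Multiplication by `x` as a map `R ⧸ (K : x) → R ⧸ K`. -/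
noncomputable def colonMap (K : Ideal R) (x : R) : R ⧸ K.colon {x} →ₗ[R] R ⧸ K :=
  Submodule.mapQ _ K (LinearMap.mulLeft R x) (colon_singleton_eq_comap_mulLeft K x).le

theorem colonMap_injective (K : Ideal R) (x : R) : Function.Injective (colonMap K x) := by
  rw [← LinearMap.ker_eq_bot, colonMap, Submodule.ker_mapQ, ← colon_singleton_eq_comap_mulLeft,
    Submodule.mkQ_map_self]

theorem exact_colonMap_factor (K : Ideal R) (x : R) :
    Function.Exact (colonMap K x)
      (Submodule.factor (le_sup_left : K ≤ K ⊔ Ideal.span {x})) := by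
  have hrange : LinearMap.range (LinearMap.mulLeft R x) = Ideal.span {x} := by
    ext; simp [Ideal.mem_span_singleton', mul_comm]
  rw [LinearMap.exact_iff, colonMap, Submodule.range_mapQ, hrange, Submodule.factor,
    Submodule.ker_mapQ, Submodule.comap_id, Submodule.map_sup, Submodule.mkQ_map_self, bot_sup_eq]

theorem shortExact_colon (K : Ideal R) (x : R) :
    (ModuleCat.shortComplexOfCompEqZero (colonMap K x)
      (Submodule.factor (le_sup_left (b := Ideal.span {x})))
      (exact_colonMap_factor K x).linearMap_comp_eq_zero).ShortExact :=
  ModuleCat.shortComplex_shortExact _ (exact_colonMap_factor K x) (colonMap_injective K x)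
    (Submodule.factor_surjective le_sup_left)

theorem quotientPD_le_of_colon {n : ℕ} (hcolon : quotientPD (K.colon {x}) ≤ n)
    (hsup : quotientPD (K ⊔ Ideal.span {x}) ≤ n) : quotientPD K ≤ n := by
  rw [projectiveDimension_le_iff] at hcolon hsup ⊢
  exact (shortExact_colon K x).hasProjectiveDimensionLT_X₂ (n + 1) hcolon hsup

theorem colon_singleton_eq_self (hx : IsSMulRegular (R ⧸ K) x) : K.colon {x} = K := by
  rw [colon_singleton_eq_comap_mulLeft]
  exact (isSMulRegular_on_quot_iff_lsmul_comap_eq K x).1 hx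

theorem colon_sup_span_singleton_mul (hx : IsSMulRegular (R ⧸ K) x) (b : R) :
    (K ⊔ Ideal.span {x * b}).colon {x} = K ⊔ Ideal.span {b} := by
  refine le_antisymm (fun q hq => ?_) (sup_le (fun q hq => ?_) ?_)
  · obtain ⟨j, hj, _, hr, hjr⟩ := Submodule.mem_sup.1 (Submodule.mem_colon_singleton.1 hq)
    obtain ⟨r, rfl⟩ := Ideal.mem_span_singleton.1 hr
    have hmem : x • (q - b * r) ∈ K := by
      rw [smul_eq_mul] at hjr ⊢
      exact (by linear_combination hjr : j = x * (q - b * r)) ▸ hj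
    exact Submodule.mem_sup.2 ⟨_, (isSMulRegular_quotient_iff_mem_of_smul_mem K x).1 hx _ hmem, _,
      Ideal.mem_span_singleton.2 ⟨r, rfl⟩, sub_add_cancel _ _⟩
  · exact Submodule.mem_colon_singleton.2 (Ideal.mem_sup_left (K.mul_mem_right x hq))
  · rw [Ideal.span_singleton_le_iff_mem, Submodule.mem_colon_singleton, smul_eq_mul, mul_comm]
    exact Ideal.mem_sup_right (Ideal.mem_span_singleton_self _)

theorem quotientPD_sup_span_singleton_le (hx : IsSMulRegular (R ⧸ K) x) {n : ℕ}
    (hK : quotientPD K ≤ n) : quotientPD (K ⊔ Ideal.span {x}) ≤ n + 1 := by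
  have hcolon : quotientPD (K.colon {x}) ≤ n := (colon_singleton_eq_self hx).symm ▸ hK
  rw [← Nat.cast_succ]
  rw [projectiveDimension_le_iff] at hcolon hK ⊢
  exact (shortExact_colon K x).hasProjectiveDimensionLT_X₃ (n + 1) hcolon
    (hasProjectiveDimensionLT_of_ge _ (n + 1) (n + 2) (Nat.le_succ _))

end ColonSequence

end QuotientPD

/-! ### Projective dimension through Ext functors -/

section ExtFunctor

variable {R : Type u} [CommRing R]

theorem subsingleton_ext_obj_iff (M N : ModuleCat.{u} R) (n : ℕ) :
    Subsingleton (((Ext R (ModuleCat.{u} R) (n + 1)).obj (op M)).obj N) ↔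
      Subsingleton (Abelian.Ext M N (n + 1)) := by
  let P := projectiveResolution M
  rw [← ModuleCat.isZero_iff_subsingleton, (P.isoExt (n + 1) N).isZero_iff,
    ← HomologicalComplex.exactAt_iff_isZero_homology,
    HomologicalComplex.exactAt_iff' _ n (n + 1) (n + 2) (by simp) (by simp),
    ShortComplex.moduleCat_exact_iff]
  constructor
  · refine fun h => subsingleton_of_forall_eq 0 fun a => ?_
    obtain ⟨f, hf, rfl⟩ := P.extMk_surjective a (n + 2) rfl
    rw [P.extMk_eq_zero_iff f (n + 2) rfl hf n rfl]
    exact h f hf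
  · exact fun _ f hf =>
      (P.extMk_eq_zero_iff f (n + 2) rfl hf n rfl).1 (Subsingleton.elim _ _)

theorem forall_subsingleton_ext_obj_iff (M : ModuleCat.{u} R) (n : ℕ) :
    (∀ i : ℕ, n < i → ∀ N : ModuleCat.{u} R,
      Subsingleton (((Ext R (ModuleCat.{u} R) i).obj (op M)).obj N)) ↔
      projectiveDimension M ≤ n := by
  rw [projectiveDimension_le_iff, HasProjectiveDimensionLE, hasProjectiveDimensionLT_iff]
  constructor
  · intro h i hi N e
    obtain ⟨i, rfl⟩ := Nat.exists_eq_add_one.2 (Nat.zero_lt_of_lt hi)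
    have := (subsingleton_ext_obj_iff M N i).1 (h _ hi N)
    exact Subsingleton.elim e 0
  · intro h i hi N
    obtain ⟨i, rfl⟩ := Nat.exists_eq_add_one.2 (Nat.zero_lt_of_lt hi)
    exact (subsingleton_ext_obj_iff M N i).2 (subsingleton_of_forall_eq 0 fun e => h _ hi e)

theorem projDim_eq_of_projectiveDimension_eq {M : Type u} [AddCommGroup M] [Module R M] {n : ℕ}
    (h : projectiveDimension (ModuleCat.of R M) = n) : projDim R M = n := by
  have hset : {m : ℕ | ∀ i : ℕ, m < i → ∀ N : ModuleCat.{u} R,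
      Subsingleton (((Ext R (ModuleCat.{u} R) i).obj (op (ModuleCat.of R M))).obj N)} =
      Set.Ici n := by
    ext m
    simpa [h] using forall_subsingleton_ext_obj_iff (ModuleCat.of R M) m
  rw [projDim, hset]
  refine IsLeast.csInf_eq ⟨Set.mem_image_of_mem _ Set.self_mem_Ici, ?_⟩
  rintro _ ⟨m, hm, rfl⟩
  exact Nat.cast_le.2 hm

end ExtFunctor

/-! ### Variables over a subring -/

section Variable

variable {S : Type*} [CommRing S] {A : Subring S} {z : S} {J : Ideal S}

/-- `S` is the polynomial ring in the variable `z` over its subring `A`. -/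
def IsVariable (A : Subring S) (z : S) : Prop :=
  Function.Bijective (Polynomial.aeval z : Polynomial A →ₐ[A] S)

/-- `J` is generated by elements of the subring `A`. -/
def IsExtended (A : Subring S) (J : Ideal S) : Prop :=
  ∃ K : Ideal A, K.map (algebraMap A S) = J

theorem isExtended_span {G : Set S} (hG : G ⊆ A) : IsExtended A (Ideal.span G) := by
  refine ⟨Ideal.span (Subtype.val ⁻¹' G), ?_⟩
  rw [Ideal.map_span]
  congr 1
  exact Subtype.image_preimage_coe (A : Set S) G |>.trans (Set.inter_eq_right.2 hG)

theorem IsExtended.sup {J' : Ideal S} (hJ : IsExtended A J) (hJ' : IsExtended A J') :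
    IsExtended A (J ⊔ J') := by
  obtain ⟨K, rfl⟩ := hJ
  obtain ⟨K', rfl⟩ := hJ'
  exact ⟨K ⊔ K', Ideal.map_sup _ _ _⟩

theorem IsVariable.aeval_mem_iff (hz : IsVariable A z) (hJ : IsExtended A J) (f : Polynomial A) :
    Polynomial.aeval z f ∈ J ↔ ∀ n, (f.coeff n : S) ∈ J := by
  obtain ⟨K, rfl⟩ := hJ
  let e : Polynomial A ≃ₐ[A] S := AlgEquiv.ofBijective _ hz
  have hmap : K.map (algebraMap A S) = (K.map Polynomial.C).map (e : Polynomial A →+* S) := by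
    rw [Ideal.map_map]
    congr 1
    exact e.toAlgHom.comp_algebraMap.symm
  have hmem (g : Polynomial A) :
      Polynomial.aeval z g ∈ K.map (algebraMap A S) ↔ ∀ n, g.coeff n ∈ K := by
    rw [hmap, ← Ideal.mem_map_C_iff]
    refine (Ideal.mem_map_of_equiv (e : Polynomial A ≃+* S) _).trans
      ⟨fun ⟨x, hx, hxg⟩ => e.injective hxg ▸ hx, fun hg => ⟨g, hg, rfl⟩⟩
  have hcoe (a : A) : (a : S) ∈ K.map (algebraMap A S) ↔ a ∈ K := by
    refine Iff.trans ?_ ((hmem (Polynomial.C a)).trans ⟨fun h => by simpa using h 0, fun h n => ?_⟩)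
    · rw [Polynomial.aeval_C]; rfl
    · rw [Polynomial.coeff_C]; split_ifs; exacts [h, K.zero_mem]
  simp only [hmem, hcoe]

theorem IsVariable.isSMulRegular_quotient (hz : IsVariable A z) (hJ : IsExtended A J) :
    IsSMulRegular (S ⧸ J) z := by
  refine (isSMulRegular_quotient_iff_mem_of_smul_mem J z).2 fun q hq => ?_
  obtain ⟨f, rfl⟩ := hz.2 q
  have hXf : Polynomial.aeval z (Polynomial.X * f) ∈ J := by simpa using hq
  rw [hz.aeval_mem_iff hJ] at hXf ⊢
  exact fun n => by simpa using hXf (n + 1)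

theorem IsVariable.exists_eq_add_mul (hz : IsVariable A z) (hJ : IsExtended A J) (q : S) :
    ∃ q₀ q₁, q = q₀ + z * q₁ ∧ ∀ a ∈ A, a * q ∈ J ⊔ Ideal.span {z} → a * q₀ ∈ J := by
  obtain ⟨f, rfl⟩ := hz.2 q
  refine ⟨f.coeff 0, Polynomial.aeval z f.divX, ?_, fun a ha haq => ?_⟩
  · conv_lhs => rw [← f.X_mul_divX_add, map_add, map_mul, Polynomial.aeval_X, add_comm,
      Polynomial.aeval_C]
    rfl
  · obtain ⟨j, hj, r, hr, hjr⟩ := Submodule.mem_sup.1 haq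
    obtain ⟨r, rfl⟩ := Ideal.mem_span_singleton.1 hr
    obtain ⟨g, rfl⟩ := hz.2 r
    have hmem : Polynomial.aeval z (Polynomial.C ⟨a, ha⟩ * f - Polynomial.X * g) ∈ J := by
      rw [map_sub, map_mul, map_mul, Polynomial.aeval_X, Polynomial.aeval_C]
      exact eq_sub_of_add_eq hjr ▸ hj
    simpa using (hz.aeval_mem_iff hJ _).1 hmem 0

theorem IsVariable.mul_coeff_add_mul_coeff_mem (hz : IsVariable A z) (hJ : IsExtended A J) {b w : A}
    {f : Polynomial A} (hf : (z * b + w) * Polynomial.aeval z f ∈ J) (n : ℕ) :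
    (b * f.coeff n + w * f.coeff (n + 1) : S) ∈ J := by
  have hmem : Polynomial.aeval z ((Polynomial.X * Polynomial.C b + Polynomial.C w) * f) ∈ J := by
    rw [map_mul, map_add, map_mul, Polynomial.aeval_X, Polynomial.aeval_C, Polynomial.aeval_C]
    exact hf
  have hcoeff := (hz.aeval_mem_iff hJ _).1 hmem (n + 1)
  rwa [add_mul, mul_assoc, Polynomial.coeff_add, Polynomial.coeff_X_mul, Polynomial.coeff_C_mul,
    Polynomial.coeff_C_mul] at hcoeff

theorem IsVariable.mul_mem_of_add_mul_mem (hz : IsVariable A z) (hJ : IsExtended A J) {b w q : S}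
    (hb : b ∈ A) (hw : w ∈ A) (hbw : ∀ a, b * a ∈ J → w * a ∈ J) (hq : (z * b + w) * q ∈ J) :
    b * q ∈ J := by
  obtain ⟨f, rfl⟩ := hz.2 q
  lift b to A using hb
  lift w to A using hw
  have hcoeff : ∀ m n, f.natDegree < n + m → (b * f.coeff n : S) ∈ J := by
    intro m
    induction m with
    | zero => exact fun n hn => by simp [f.coeff_eq_zero_of_natDegree_lt (n := n) hn]
    | succ m ih =>
      exact fun n hn => (Submodule.add_mem_iff_left _ (hbw _ (ih (n + 1) (by lia)))).1
        (hz.mul_coeff_add_mul_coeff_mem hJ hq n)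
  have hmem : Polynomial.aeval z (Polynomial.C b * f) ∈ J :=
    (hz.aeval_mem_iff hJ _).2 fun n => by
      simpa using hcoeff (f.natDegree + 1) n (by lia)
  rwa [map_mul, Polynomial.aeval_C] at hmem

theorem IsVariable.exists_pow_mul_mem (hz : IsVariable A z) (hJ : IsExtended A J) {b w q : S}
    (hb : b ∈ A) (hw : w ∈ A) (hq : (z * b + w) * q ∈ J) :
    ∃ k, b ^ k * q ∈ J := by
  obtain ⟨f, rfl⟩ := hz.2 q
  lift b to A using hb
  lift w to A using hw
  have hcoeff : ∀ m n, f.natDegree < n + m → (b ^ m * f.coeff n : S) ∈ J := by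
    intro m
    induction m with
    | zero => exact fun n hn => by simp [f.coeff_eq_zero_of_natDegree_lt (n := n) hn]
    | succ m ih =>
      intro n hn
      have hmul := J.mul_mem_left ((b : S) ^ m) (hz.mul_coeff_add_mul_coeff_mem hJ hq n)
      have hnext := J.mul_mem_left (w : S) (ih (n + 1) (by lia))
      exact (by ring : (b : S) ^ (m + 1) * f.coeff n = b ^ m * (b * f.coeff n +
        w * f.coeff (n + 1)) - w * (b ^ m * f.coeff (n + 1))) ▸ sub_mem hmul hnext
  have hmem : Polynomial.aeval z (Polynomial.C (b ^ (f.natDegree + 1)) * f) ∈ J :=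
    (hz.aeval_mem_iff hJ _).2 fun n => by
      rw [Polynomial.coeff_C_mul]
      exact hcoeff (f.natDegree + 1) n (by lia)
  rw [map_mul, Polynomial.aeval_C, map_pow] at hmem
  exact ⟨_, hmem⟩

end Variable

section EqualColons

variable {S κ : Type*} [CommRing S] {A : Subring S} {J : Ideal S} {y : κ → S} {z b w : S}

theorem IsVariable.isSMulRegular_sup_span_singleton (hz : IsVariable A z) (hJ : IsExtended A J)
    (hw : w ∈ A) (hwb : ∀ q, w * q ∈ J → b * q ∈ J) :
    IsSMulRegular (S ⧸ (J ⊔ Ideal.span {z * b + w})) z := by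
  refine (isSMulRegular_quotient_iff_mem_of_smul_mem _ z).2 fun p hp => ?_
  obtain ⟨j, hj, r, hr, hjr⟩ := Submodule.mem_sup.1 hp
  obtain ⟨q, rfl⟩ := Ideal.mem_span_singleton.1 hr
  obtain ⟨q₀, q₁, rfl, hq₀⟩ := hz.exists_eq_add_mul hJ q
  have hwq₀ : w * q₀ ∈ J := hq₀ w hw <| Submodule.mem_sup.2
    ⟨-j, neg_mem hj, z * (p - b * (q₀ + z * q₁)), Ideal.mem_span_singleton.2 ⟨_, rfl⟩, by
      rw [smul_eq_mul] at hjr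
      linear_combination -hjr⟩
  have hzp : z • (p - (z * b + w) * q₁) ∈ J := by
    rw [smul_eq_mul] at hjr ⊢
    have hsum := add_mem hj (add_mem (J.mul_mem_left z (hwb q₀ hwq₀)) hwq₀)
    convert hsum using 1
    linear_combination -hjr
  exact Submodule.mem_sup.2 ⟨_, (isSMulRegular_quotient_iff_mem_of_smul_mem J z).1
    (hz.isSMulRegular_quotient hJ) _ hzp, _, Ideal.mem_span_singleton.2 ⟨q₁, rfl⟩,
    sub_add_cancel _ _⟩

/-- The colon ideals `J : y t` agree for all `t`; for the ideal of a generic matrix this yields the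
regularity of its entries modulo partial sums of a further row. -/
def HasEqualColons (J : Ideal S) (y : κ → S) : Prop :=
  ∀ s t q, y s * q ∈ J → y t * q ∈ J

theorem HasEqualColons.sup_span_singleton (h : HasEqualColons J y) (hz : IsVariable A z)
    (hJ : IsExtended A J) (hy : ∀ t, y t ∈ A) : HasEqualColons (J ⊔ Ideal.span {z}) y := by
  intro s t q hq
  obtain ⟨q₀, q₁, rfl, hq₀⟩ := hz.exists_eq_add_mul hJ q
  rw [mul_add, mul_left_comm]
  exact add_mem (Ideal.mem_sup_left (h s t q₀ (hq₀ _ (hy s) hq)))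
    (Ideal.mem_sup_right (Ideal.mem_span_singleton.2 ⟨_, rfl⟩))

end EqualColons

/-! ### Coordinate families -/

section CoordinateFamily

variable {ι : Type*} {S : Type*} [CommRing S] {A : Subring S} {v : ι → S}

/-- `S` is the polynomial ring in the family `v` over its subring `A`. -/
def IsCoordinateFamily (A : Subring S) (v : ι → S) : Prop :=
  Function.Bijective (MvPolynomial.aeval v : MvPolynomial ι A →ₐ[A] S)

theorem exists_isCoordinateFamily_of_ringEquiv {B : Type*} [CommRing B]
    (e : MvPolynomial ι B ≃+* S) :
    ∃ A : Subring S, (∀ b, e (MvPolynomial.C b) ∈ A) ∧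
      IsCoordinateFamily A fun i => e (MvPolynomial.X i) := by
  let r := ((e : MvPolynomial ι B →+* S).comp MvPolynomial.C).rangeRestrict
  have hr : Function.Bijective (MvPolynomial.map (σ := ι) r) :=
    ⟨MvPolynomial.map_injective r fun _ _ h =>
      MvPolynomial.C_injective ι B (e.injective (congrArg Subtype.val h)),
      MvPolynomial.map_surjective r (RingHom.rangeRestrict_surjective _)⟩
  refine ⟨_, fun b => (r b).2, (Function.Bijective.of_comp_iff _ hr).1 ?_⟩
  convert e.bijective
  ext p
  refine (MvPolynomial.aeval_def _ _).trans ((MvPolynomial.eval₂_map _ _ _ p).trans ?_)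
  exact RingHom.congr_fun (f := MvPolynomial.eval₂Hom _ _) (g := (e : MvPolynomial ι B →+* S))
    (MvPolynomial.ringHom_ext (fun b => (MvPolynomial.eval₂_C _ _ b).trans rfl)
      (fun i => by simp)) p

theorem IsCoordinateFamily.exists_ringEquiv (h : IsCoordinateFamily A v) :
    ∃ e : MvPolynomial ι A ≃+* S, (∀ i, e (MvPolynomial.X i) = v i) ∧
      ∀ a, e (MvPolynomial.C a) = a :=
  ⟨RingEquiv.ofBijective (MvPolynomial.aeval v : MvPolynomial ι A →ₐ[A] S) h,
    fun i => MvPolynomial.aeval_X v i, fun a => MvPolynomial.aeval_C v a⟩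

theorem IsCoordinateFamily.exists_comp {ι' : Type*} (h : IsCoordinateFamily A v) {j : ι' → ι}
    (hj : Function.Injective j) :
    ∃ A', A ≤ A' ∧ (∀ i ∉ Set.range j, v i ∈ A') ∧ IsCoordinateFamily A' (v ∘ j) := by
  classical
  obtain ⟨e, heX, heC⟩ := h.exists_ringEquiv
  let ε : ι' ⊕ {i // i ∉ Set.range j} ≃ ι :=
    ((Equiv.ofInjective j hj).sumCongr (Equiv.refl _)).trans (Equiv.sumCompl (· ∈ Set.range j))
  let E := ((MvPolynomial.sumAlgEquiv A ι' {i // i ∉ Set.range j}).symm.toRingEquiv.trans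
    (MvPolynomial.renameEquiv A ε).toRingEquiv).trans e
  have hE (i : ι') : E (MvPolynomial.X i) = v (j i) := by simp [E, ε, heX]
  obtain ⟨A', hA', hcoord⟩ := exists_isCoordinateFamily_of_ringEquiv E
  refine ⟨A', fun a ha => ?_, fun i hi => ?_, ?_⟩
  · simpa [E, heC] using hA' (MvPolynomial.C ⟨a, ha⟩)
  · simpa [E, ε, heX] using hA' (MvPolynomial.X ⟨i, hi⟩)
  · exact (funext hE : (fun i => E (MvPolynomial.X i)) = v ∘ j) ▸ hcoord

theorem IsCoordinateFamily.add_of_mem (h : IsCoordinateFamily A v) {c : ι → S}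
    (hc : ∀ i, c i ∈ A) : IsCoordinateFamily A (v + c) := by
  lift c to ι → A using hc
  let f : MvPolynomial ι A →ₐ[A] MvPolynomial ι A :=
    MvPolynomial.aeval fun i => MvPolynomial.X i + MvPolynomial.C (c i)
  let g : MvPolynomial ι A →ₐ[A] MvPolynomial ι A :=
    MvPolynomial.aeval fun i => MvPolynomial.X i - MvPolynomial.C (c i)
  let φ : MvPolynomial ι A ≃ₐ[A] MvPolynomial ι A := AlgEquiv.ofAlgHom f g
    (by ext i; simp [f, g, MvPolynomial.algHom_C]) (by ext i; simp [f, g, MvPolynomial.algHom_C])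
  have hcomp : (MvPolynomial.aeval v).comp f = MvPolynomial.aeval (v + fun i => (c i : S)) := by
    ext i
    simp only [f, AlgHom.comp_apply, MvPolynomial.aeval_X, map_add, MvPolynomial.algHom_C,
      Pi.add_apply]
    rfl
  rw [IsCoordinateFamily, ← hcomp, AlgHom.coe_comp]
  exact Function.Bijective.comp h φ.bijective

theorem IsCoordinateFamily.exists_algebraMap (h : IsCoordinateFamily A v) {x : S} (hx : x ∈ A) :
    ∃ A' : Subring (Localization.Away x), (∀ a ∈ A, algebraMap S (Localization.Away x) a ∈ A') ∧
      IsLocalization.Away.invSelf x ∈ A' ∧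
      IsCoordinateFamily A' fun i => algebraMap S (Localization.Away x) (v i) := by
  obtain ⟨e, heX, heC⟩ := h.exists_ringEquiv
  lift x to A using hx
  let _ : Algebra (MvPolynomial ι A) (MvPolynomial ι (Localization.Away x)) :=
    MvPolynomial.algebraMvPolynomial
  have hpowers : ((Submonoid.powers x).map (MvPolynomial.C : A →+* MvPolynomial ι A)).map
      e.toMonoidHom = Submonoid.powers (x : S) := by
    rw [Submonoid.map_powers, Submonoid.map_powers]
    exact congrArg _ (heC x)
  let E : MvPolynomial ι (Localization.Away x) ≃+* Localization.Away (x : S) :=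
    IsLocalization.ringEquivOfRingEquiv
      (M := (Submonoid.powers x).map (MvPolynomial.C : A →+* MvPolynomial ι A))
      (T := Submonoid.powers (x : S)) _ _ e hpowers
  have hE (p) : E (MvPolynomial.map (algebraMap A (Localization.Away x)) p) =
      algebraMap S (Localization.Away (x : S)) (e p) :=
    IsLocalization.ringEquivOfRingEquiv_eq hpowers p
  have hEX (i : ι) : E (MvPolynomial.X i) = algebraMap S (Localization.Away (x : S)) (v i) := by
    rw [← heX, ← hE, MvPolynomial.map_X]
  have hEC (a : A) : E (MvPolynomial.C (algebraMap A (Localization.Away x) a)) =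
      algebraMap S (Localization.Away (x : S)) a := by
    rw [← MvPolynomial.map_C, hE, heC]
  have hinv : E (MvPolynomial.C (IsLocalization.Away.invSelf x)) =
      IsLocalization.Away.invSelf (x : S) := by
    refine (IsLocalization.Away.algebraMap_isUnit (S := Localization.Away (x : S))
      (x : S)).mul_left_cancel ?_
    rw [← hEC, ← map_mul, ← map_mul, hEC, IsLocalization.Away.mul_invSelf,
      IsLocalization.Away.mul_invSelf, map_one, map_one]
  obtain ⟨A', hA', hcoord⟩ := exists_isCoordinateFamily_of_ringEquiv E
  exact ⟨A', fun a ha => hEC ⟨a, ha⟩ ▸ hA' _, hinv ▸ hA' _, by simpa only [hEX] using hcoord⟩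

theorem IsCoordinateFamily.isVariable [Unique ι] (h : IsCoordinateFamily A v) :
    IsVariable A (v default) := by
  have hcomp : (MvPolynomial.aeval v).comp (MvPolynomial.uniqueAlgEquiv A ι).symm.toAlgHom =
      Polynomial.aeval (v default) := by
    ext
    simp
  rw [IsVariable, ← hcomp, AlgHom.coe_comp]
  exact Function.Bijective.comp h (MvPolynomial.uniqueAlgEquiv A ι).symm.bijective

theorem IsCoordinateFamily.exists_isVariable_add (h : IsCoordinateFamily A v) (i : ι) :
    ∃ A', A ≤ A' ∧ (∀ i' ≠ i, v i' ∈ A') ∧ ∀ w ∈ A', IsVariable A' (v i + w) := by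
  obtain ⟨A', hle, hmem, hA'⟩ := h.exists_comp (j := fun _ : Unit => i)
    (Function.injective_of_subsingleton _)
  exact ⟨A', hle, fun i' hi' => hmem i' (by simpa [eq_comm] using hi'),
    fun w hw => (hA'.add_of_mem (c := fun _ => w) fun _ => hw).isVariable⟩

theorem IsCoordinateFamily.exists_isPrime [Nontrivial S] (h : IsCoordinateFamily A v) (c : ι → A) :
    ∃ p : Ideal S, p.IsPrime ∧ ∀ i, v i - c i ∈ p := by
  obtain ⟨e, heX, heC⟩ := h.exists_ringEquiv
  obtain ⟨m, hm⟩ := Ideal.exists_maximal A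
  let φ : S →+* A ⧸ m := ((Ideal.Quotient.mk m).comp (MvPolynomial.eval c)).comp
    (e.symm : S →+* MvPolynomial ι A)
  refine ⟨RingHom.ker φ, RingHom.ker_isPrime φ, fun i => ?_⟩
  rw [RingHom.mem_ker, ← heX, ← heC, ← map_sub]
  simp [φ]

end CoordinateFamily

/-! ### Linear forms -/

section LinearForms

variable {k : Type*} [Field k] {σ ι : Type*}

theorem bijective_aeval_basis
    (b : Module.Basis ι k (MvPolynomial.homogeneousSubmodule σ k 1)) :
    Function.Bijective
      (MvPolynomial.aeval fun i => (b i : MvPolynomial σ k) : MvPolynomial ι k →ₐ[k] _) := by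
  let V := MvPolynomial.homogeneousSubmodule σ k 1
  let X₁ (s : σ) : V := ⟨MvPolynomial.X s, MvPolynomial.isHomogeneous_X k s⟩
  have hX₁ : LinearIndependent k X₁ :=
    .of_comp V.subtype (MvPolynomial.linearIndependent_X σ k)
  have hspan : ⊤ ≤ Submodule.span k (Set.range X₁) := by
    rw [← Submodule.map_le_map_iff_of_injective V.subtype_injective, Submodule.map_subtype_top,
      Submodule.map_span, ← Set.range_comp]
    exact MvPolynomial.homogeneousSubmodule_one_eq_span_X.le
  let B := Module.Basis.mk hX₁ hspan
  let e := (SymmetricAlgebra.equivMvPolynomial b).symm.trans (SymmetricAlgebra.equivMvPolynomial B)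
  have hB : (SymmetricAlgebra.equivMvPolynomial B).toLinearMap ∘ₗ SymmetricAlgebra.ι k V =
      V.subtype := by
    refine B.ext fun s => ?_
    rw [LinearMap.comp_apply, AlgEquiv.toLinearMap_apply,
      SymmetricAlgebra.equivMvPolynomial_ι_apply, Module.Basis.mk_apply]
    rfl
  have he : e.toAlgHom = MvPolynomial.aeval fun i => (b i : MvPolynomial σ k) := by
    ext1 i
    simpa [e] using LinearMap.congr_fun hB (b i)
  exact he ▸ e.bijective

theorem exists_isCoordinateFamily_of_linearIndependent {v : ι → MvPolynomial σ k}
    (hv : ∀ i, (v i).IsHomogeneous 1) (hind : LinearIndependent k v) :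
    ∃ A, IsCoordinateFamily A v := by
  let w (i : ι) : MvPolynomial.homogeneousSubmodule σ k 1 := ⟨v i, hv i⟩
  have hw : LinearIndependent k w := .of_comp (Submodule.subtype _) hind
  let b := Module.Basis.extend hw.linearIndepOn_id
  obtain ⟨_, -, hb⟩ := exists_isCoordinateFamily_of_ringEquiv
    (RingEquiv.ofBijective _ (bijective_aeval_basis b))
  obtain ⟨A, -, -, hA⟩ := hb.exists_comp
    (j := fun i : ι => ⟨w i, hw.linearIndepOn_id.subset_extend _ ⟨i, rfl⟩⟩)
    fun i i' hi => hw.injective (congrArg Subtype.val hi)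
  refine ⟨A, ?_⟩
  convert hA using 1
  ext1 i
  simp [b, w]

end LinearForms

/-! ### Ideals of bilinear forms -/

section RowIdeal

open Matrix

variable {S : Type*} [CommRing S] {m κ : Type*} [Fintype κ]

/-- The ideal generated by the bilinear forms `∑ t, X i t * y t`, one for each row `i` of `X`. -/
def rowIdeal (X : Matrix m κ S) (y : κ → S) : Ideal S :=
  Ideal.span (Set.range (X *ᵥ y))

theorem rowIdeal_eq_bot [IsEmpty m] (X : Matrix m κ S) (y : κ → S) : rowIdeal X y = ⊥ := by
  rw [rowIdeal, Set.range_eq_empty, Ideal.span_empty]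

theorem rowIdeal_succ {n : ℕ} (X : Matrix (Fin (n + 1)) κ S) (y : κ → S) :
    rowIdeal X y = rowIdeal (X.submatrix Fin.succ id) y ⊔ Ideal.span {∑ t, X 0 t * y t} := by
  rw [rowIdeal, ← Fin.cons_self_tail (X *ᵥ y), Fin.range_cons, Set.insert_eq, Ideal.span_union,
    sup_comm]
  rfl

theorem map_rowIdeal {S' : Type*} [CommRing S'] (φ : S →+* S') (X : Matrix m κ S) (y : κ → S) :
    (rowIdeal X y).map φ = rowIdeal (X.map φ) (φ ∘ y) := by
  rw [rowIdeal, Ideal.map_span, ← Set.range_comp]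
  congr 2
  exact funext fun i => φ.map_mulVec X y i

theorem isExtended_rowIdeal {A : Subring S} {X : Matrix m κ S} {y : κ → S}
    (hX : ∀ i t, X i t ∈ A) (hy : ∀ t, y t ∈ A) : IsExtended A (rowIdeal X y) :=
  isExtended_span (Set.range_subset_iff.2 fun i =>
    sum_mem fun t _ => mul_mem (hX i t) (hy t))

theorem span_range_sup_span_singleton_eq {f g : m → S} {z : S} (hfg : ∀ i, z ∣ f i - g i) :
    Ideal.span (Set.range f) ⊔ Ideal.span {z} = Ideal.span (Set.range g) ⊔ Ideal.span {z} := by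
  rw [← Ideal.span_union, ← Ideal.span_union]
  have hle {f g : m → S} (hfg : ∀ i, z ∣ f i - g i) :
      Ideal.span (Set.range f ∪ {z}) ≤ Ideal.span (Set.range g ∪ {z}) := by
    rw [Ideal.span_union _ {z}, sup_le_iff, Ideal.span_le, Set.range_subset_iff]
    refine ⟨fun i => ?_, Ideal.span_mono Set.subset_union_right⟩
    rw [← sub_add_cancel (f i) (g i)]
    exact add_mem (Ideal.mem_of_dvd _ (hfg i) (Ideal.subset_span (Or.inr rfl)))
      (Ideal.subset_span (Or.inl ⟨i, rfl⟩))
  exact le_antisymm (hle hfg) (hle fun i => dvd_sub_comm.1 (hfg i))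

variable [DecidableEq κ] (X : Matrix m κ S) (y : κ → S) (s : κ)

/-- The linear form `y s + ∑ c t * y t`, which allows to eliminate `y s`. -/
def pivotForm (c : {t // t ≠ s} → S) : S :=
  y s + ∑ t, c t * y t

/-- The matrix obtained from `X` by the substitution that kills `pivotForm y s c`, that is,
`y s = -∑ c t * y t`; its column `s` is discarded. -/
def clearColumn (c : {t // t ≠ s} → S) : Matrix m {t // t ≠ s} S :=
  Matrix.of fun i t => X i t - X i s * c t

theorem rowIdeal_sup_pivotForm (c : {t // t ≠ s} → S) :
    rowIdeal X y ⊔ Ideal.span {pivotForm y s c} =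
      rowIdeal (clearColumn X s c) (fun t => y t) ⊔ Ideal.span {pivotForm y s c} := by
  refine span_range_sup_span_singleton_eq fun i => ⟨X i s, ?_⟩
  simp only [mulVec, dotProduct, Fintype.sum_eq_add_sum_subtype_ne _ s, clearColumn, of_apply,
    pivotForm, sub_mul, Finset.sum_sub_distrib, add_mul, Finset.sum_mul]
  simp only [mul_comm, mul_left_comm]
  ring

variable {s} in
theorem span_sum_mul_eq_span_pivotForm {T : Finset κ} (hs : s ∈ T) {x : κ → S} {u : S}
    (hu : x s * u = 1) :
    Ideal.span {∑ t ∈ T, x t * y t} =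
      Ideal.span {pivotForm y s fun t => if ↑t ∈ T then x t * u else 0} := by
  have hsum : ∑ t ∈ T, x t * y t = x s * pivotForm y s fun t => if ↑t ∈ T then x t * u else 0 := by
    rw [← Finset.sum_ite_mem_eq, Fintype.sum_eq_add_sum_subtype_ne _ s, if_pos hs, pivotForm,
      mul_add, Finset.mul_sum]
    congr 1
    refine Finset.sum_congr rfl fun t _ => ?_
    split_ifs
    · linear_combination -(x t * y t) * hu
    · simp
  rw [hsum, Ideal.span_singleton_mul_left_unit (.of_mul_eq_one _ hu)]

end RowIdeal

/-! ### Generic matrices -/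

section Generic

variable {S : Type*} [CommRing S] {m κ : Type*} {A : Subring S} {X : Matrix m κ S} {y : κ → S}

/-- `S` is the polynomial ring over its subring `A` in the entries of `X` and of `y`. -/
def IsGenericOver (A : Subring S) (X : Matrix m κ S) (y : κ → S) : Prop :=
  IsCoordinateFamily A (Sum.elim (Function.uncurry X) y)

theorem IsGenericOver.exists_submatrix {m' κ' : Type*} (h : IsGenericOver A X y) {f : m' → m}
    (hf : Function.Injective f) {g : κ' → κ} (hg : Function.Injective g) :
    ∃ A', A ≤ A' ∧ (∀ i t, (i ∈ Set.range f → t ∉ Set.range g) → X i t ∈ A') ∧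
      IsGenericOver A' (X.submatrix f g) (y ∘ g) := by
  obtain ⟨A', hle, hmem, hA'⟩ := h.exists_comp (j := Sum.map (Prod.map f g) g)
    (Sum.map_injective.2 ⟨hf.prodMap hg, hg⟩)
  refine ⟨A', hle, fun i t hit => hmem (Sum.inl (i, t)) ?_, ?_⟩
  · rintro ⟨⟨i', t'⟩ | t', h⟩
    · simp only [Sum.map_inl, Sum.inl.injEq, Prod.map_apply, Prod.mk.injEq] at h
      exact hit ⟨i', h.1⟩ ⟨t', h.2⟩
    · simp at h
  · rw [IsGenericOver]
    convert hA' using 2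
    ext (_ | _) <;> rfl

theorem IsGenericOver.submatrix_succ {n : ℕ} {X : Matrix (Fin (n + 1)) κ S}
    (h : IsGenericOver A X y) :
    ∃ A', IsGenericOver A' (X.submatrix Fin.succ id) y := by
  obtain ⟨A', -, -, hA'⟩ := h.exists_submatrix (Fin.succ_injective n) Function.injective_id
  exact ⟨A', hA'⟩

theorem IsGenericOver.exists_isVariable_entry [Fintype κ] {n : ℕ} {X : Matrix (Fin (n + 1)) κ S}
    (h : IsGenericOver A X y) (s : κ) :
    ∃ B, IsVariable B (X 0 s) ∧ (∀ t ≠ s, X 0 t ∈ B) ∧ (∀ t, y t ∈ B) ∧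
      IsExtended B (rowIdeal (X.submatrix Fin.succ id) y) := by
  obtain ⟨B, -, hmem, hB⟩ := h.exists_isVariable_add (Sum.inl (0, s))
  have hy (t) : y t ∈ B := hmem (Sum.inr t) (by simp)
  exact ⟨B, by simpa [Function.uncurry] using hB 0 B.zero_mem,
    fun t ht => hmem (Sum.inl (0, t)) (by simpa using ht), hy,
    isExtended_rowIdeal (fun i t => hmem (Sum.inl (i.succ, t)) (by simp)) hy⟩

theorem IsGenericOver.exists_clearColumn (h : IsGenericOver A X y) {s : κ}
    {c : {t // t ≠ s} → S} (hc : ∀ t, c t ∈ A) :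
    ∃ A', IsGenericOver A' (clearColumn X s c) fun t => y t := by
  obtain ⟨A', hle, hX, hA'⟩ := h.exists_submatrix (f := id) Function.injective_id
    (g := ((↑) : {t // t ≠ s} → κ)) Subtype.val_injective
  refine ⟨A', ?_⟩
  rw [IsGenericOver]
  convert hA'.add_of_mem (c := Sum.elim (fun p => -(X p.1 s * c p.2)) 0) ?_ using 2
  · ext (⟨i, t⟩ | t)
    · exact sub_eq_add_neg _ _
    · simp
  · rintro (⟨i, t⟩ | _)
    · exact neg_mem (mul_mem (hX i s (by simp)) (hle (hc t)))
    · exact A'.zero_mem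

theorem IsGenericOver.exists_map_away (h : IsGenericOver A X y) {x : S} (hx : x ∈ A) :
    ∃ A' : Subring (Localization.Away x), (∀ a ∈ A, algebraMap S (Localization.Away x) a ∈ A') ∧
      IsLocalization.Away.invSelf x ∈ A' ∧
      IsGenericOver A' (X.map (algebraMap S (Localization.Away x)))
        (algebraMap S (Localization.Away x) ∘ y) := by
  obtain ⟨A', hle, hinv, hA'⟩ := h.exists_algebraMap hx
  refine ⟨A', hle, hinv, ?_⟩
  rw [IsGenericOver]
  convert hA' using 2 with q
  rcases q with _ | _ <;> rfl

theorem IsGenericOver.exists_isVariable_pivotForm [Fintype κ] [DecidableEq κ]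
    (h : IsGenericOver A X y) {s : κ} {c : {t // t ≠ s} → S} (hc : ∀ t, c t ∈ A) :
    ∃ B, IsVariable B (pivotForm y s c) ∧ (∀ t ≠ s, y t ∈ B) ∧
      IsExtended B (rowIdeal (clearColumn X s c) fun t => y t) := by
  obtain ⟨B, hle, hmem, hB⟩ := h.exists_isVariable_add (Sum.inr s)
  have hX (i t) : X i t ∈ B := hmem (Sum.inl (i, t)) (by simp)
  have hy (t) (ht : t ≠ s) : y t ∈ B := hmem (Sum.inr t) (by simpa using ht)
  exact ⟨B, hB _ (sum_mem fun t _ => mul_mem (hle (hc t)) (hy t t.2)), hy, isExtended_rowIdeal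
    (fun i t => sub_mem (hX i t) (mul_mem (hX i s) (hle (hc t)))) fun t => hy t t.2⟩

end Generic

/-! ### Equal colon ideals -/

section GenericColons

variable {S κ : Type*} [CommRing S] [Fintype κ] {A : Subring S} {y : κ → S} {n : ℕ}

theorem IsGenericOver.exists_pivotForm [DecidableEq κ] {X : Matrix (Fin (n + 1)) κ S}
    (h : IsGenericOver A X y) {s : κ} {T : Finset κ} (hs : s ∈ T) :
    ∃ (A' : Subring (Localization.Away (X 0 s))) (X' : Matrix (Fin n) κ _) (y' : κ → _)
      (c : {t // t ≠ s} → _), IsGenericOver A' X' y' ∧ (∀ t, y' t = algebraMap S _ (y t)) ∧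
      (∀ t, c t ∈ A') ∧
      (rowIdeal (X.submatrix Fin.succ id) y ⊔ Ideal.span {∑ t ∈ T, X 0 t * y t}).map
          (algebraMap S (Localization.Away (X 0 s))) =
        rowIdeal X' y' ⊔ Ideal.span {pivotForm y' s c} := by
  obtain ⟨A₁, -, hX, hA₁⟩ := h.exists_submatrix (Fin.succ_injective n) Function.injective_id
  have hX₀ (t) : X 0 t ∈ A₁ := hX 0 t fun ⟨i, hi⟩ => (Fin.succ_ne_zero i hi).elim
  obtain ⟨A₂, hle, hinv, hA₂⟩ := hA₁.exists_map_away (hX₀ s)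
  refine ⟨A₂, _, _, fun t => if ↑t ∈ T then
    algebraMap S _ (X 0 t) * IsLocalization.Away.invSelf (X 0 s) else 0, hA₂, fun _ => rfl,
    fun t => ?_, ?_⟩
  · dsimp only
    split_ifs
    · exact mul_mem (hle _ (hX₀ t)) hinv
    · exact A₂.zero_mem
  · simp only [Ideal.map_sup, map_rowIdeal, Ideal.map_span, Set.image_singleton, map_sum, map_mul]
    exact congrArg _ (span_sum_mul_eq_span_pivotForm _ hs
      (x := fun t => algebraMap S (Localization.Away (X 0 s)) (X 0 t))
      (IsLocalization.Away.mul_invSelf _))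

theorem IsGenericOver.mul_mem_of_sum_mul_mem {X : Matrix (Fin (n + 1)) κ S}
    (h : IsGenericOver A X y) (hcolon : HasEqualColons (rowIdeal (X.submatrix Fin.succ id) y) y)
    {s : κ} {T : Finset κ} (hs : s ∈ T) {q : S}
    (hq : (∑ t ∈ T, X 0 t * y t) * q ∈ rowIdeal (X.submatrix Fin.succ id) y) :
    y s * q ∈ rowIdeal (X.submatrix Fin.succ id) y := by
  classical
  obtain ⟨B, hB, hX, hy, htail⟩ := h.exists_isVariable_entry s
  rw [← Finset.add_sum_erase T _ hs] at hq
  refine hB.mul_mem_of_add_mul_mem htail (hy s)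
    (sum_mem fun t ht => mul_mem (hX t (Finset.ne_of_mem_erase ht)) (hy t))
    (fun a ha => ?_) hq
  rw [Finset.sum_mul]
  exact sum_mem fun t _ => mul_assoc (X 0 t) _ a ▸ Ideal.mul_mem_left _ _ (hcolon s t a ha)

theorem IsGenericOver.isSMulRegular_entry [DecidableEq κ] {X : Matrix (Fin (n + 1)) κ S}
    (h : IsGenericOver A X y) (hcolon : HasEqualColons (rowIdeal (X.submatrix Fin.succ id) y) y)
    {s : κ} {T : Finset κ} (hs : s ∉ T) (hT : T.Nonempty) :
    IsSMulRegular (S ⧸ (rowIdeal (X.submatrix Fin.succ id) y ⊔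
      Ideal.span {∑ t ∈ insert s T, X 0 t * y t})) (X 0 s) := by
  obtain ⟨t, ht⟩ := hT
  obtain ⟨B, hB, hX, hy, htail⟩ := h.exists_isVariable_entry s
  rw [Finset.sum_insert hs]
  exact hB.isSMulRegular_sup_span_singleton htail
    (sum_mem fun t ht => mul_mem (hX t (ne_of_mem_of_not_mem ht hs)) (hy t))
    fun q hq => hcolon t s q (h.mul_mem_of_sum_mul_mem hcolon ht hq)

theorem IsGenericOver.pivot_mul_mem [DecidableEq κ] {m : Type*} {X : Matrix m κ S}
    (h : IsGenericOver A X y) {s t : κ} (hts : t ≠ s) {c : {t // t ≠ s} → S} (hc : ∀ t, c t ∈ A)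
    (hcolon : HasEqualColons (rowIdeal (clearColumn X s c) fun t => y t)
      fun t : {t // t ≠ s} => y t) {q : S}
    (hq : y t * q ∈ rowIdeal X y ⊔ Ideal.span {pivotForm y s c}) :
    y s * q ∈ rowIdeal X y ⊔ Ideal.span {pivotForm y s c} := by
  obtain ⟨B, hB, hy, hrow⟩ := h.exists_isVariable_pivotForm hc
  have hsup := hcolon.sup_span_singleton hB hrow fun t => hy t t.2
  rw [rowIdeal_sup_pivotForm] at hq ⊢
  have hpivot : y s * q = pivotForm y s c * q - ∑ u, c u * (y u * q) := by
    rw [pivotForm, add_mul, Finset.sum_mul]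
    simp only [mul_assoc, add_sub_cancel_right]
  rw [hpivot]
  exact sub_mem (Ideal.mem_sup_right (Ideal.mem_span_singleton.2 ⟨q, rfl⟩))
    (sum_mem fun u _ => Ideal.mul_mem_left _ _ (hsup ⟨t, hts⟩ u q hq))

end GenericColons

theorem IsGenericOver.hasEqualColons {S κ : Type*} [CommRing S] [Fintype κ] {A : Subring S} {n : ℕ}
    {X : Matrix (Fin n) κ S} {y : κ → S} (h : IsGenericOver A X y) :
    HasEqualColons (rowIdeal X y) y := by
  classical
  induction n generalizing S κ with
  | zero =>
    intro s t q hq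
    obtain ⟨B, -, -, hB⟩ := h.exists_isVariable_add (Sum.inr s)
    have hs := (hB 0 B.zero_mem).isSMulRegular_quotient (isExtended_span (Set.empty_subset _))
    rw [Ideal.span_empty, ← rowIdeal_eq_bot X y] at hs
    exact Ideal.mul_mem_left _ _ ((isSMulRegular_quotient_iff_mem_of_smul_mem _ _).1 hs q
      (by simpa using hq))
  | succ n ih =>
    intro s t q hq
    obtain rfl | hst := eq_or_ne s t
    · exact hq
    obtain ⟨_, htail⟩ := h.submatrix_succ
    have hreg := h.isSMulRegular_entry (ih htail) (Finset.notMem_erase t Finset.univ)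
      ⟨s, by simpa using hst⟩
    rw [Finset.insert_erase (Finset.mem_univ t), ← rowIdeal_succ] at hreg
    obtain ⟨A', X', y', c, hA', hy', hc, hpivot⟩ := h.exists_pivotForm (Finset.mem_univ t)
    rw [← rowIdeal_succ] at hpivot
    obtain ⟨_, hclear⟩ := hA'.exists_clearColumn hc
    refine mem_of_algebraMap_mem_map hreg ?_
    have hq' := Ideal.mem_map_of_mem (algebraMap S (Localization.Away (X 0 t))) hq
    rw [hpivot, map_mul, ← hy'] at hq' ⊢
    exact hA'.pivot_mul_mem hst hc (ih hclear) hq'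

/-! ### The upper bound -/

section UpperBound

variable {S : Type u} [CommRing S] {κ : Type*} [Fintype κ] [DecidableEq κ] {A : Subring S}
  {y : κ → S} {d n : ℕ}

theorem IsGenericOver.quotientPD_sup_pivotForm_le {m : Type*} {X : Matrix m κ S}
    (h : IsGenericOver A X y) {s : κ} {c : {t // t ≠ s} → S} (hc : ∀ t, c t ∈ A)
    (hclear : quotientPD (rowIdeal (clearColumn X s c) fun t => y t) ≤ d) :
    quotientPD (rowIdeal X y ⊔ Ideal.span {pivotForm y s c}) ≤ d + 1 := by
  obtain ⟨B, hB, -, hrow⟩ := h.exists_isVariable_pivotForm hc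
  rw [rowIdeal_sup_pivotForm]
  exact quotientPD_sup_span_singleton_le (hB.isSMulRegular_quotient hrow) hclear

theorem IsGenericOver.quotientPD_sup_entry_mul_le {X : Matrix (Fin (n + 1)) κ S}
    (h : IsGenericOver A X y) (s : κ)
    (htail : quotientPD (rowIdeal (X.submatrix Fin.succ id) y) ≤ d)
    (hclear : quotientPD (rowIdeal (clearColumn (X.submatrix Fin.succ id) s 0) fun t => y t) ≤ d) :
    quotientPD (rowIdeal (X.submatrix Fin.succ id) y ⊔ Ideal.span {X 0 s * y s}) ≤ d + 1 := by
  obtain ⟨B, hB, -, -, hrow⟩ := h.exists_isVariable_entry s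
  obtain ⟨A', hA'⟩ := h.submatrix_succ
  have hreg := hB.isSMulRegular_quotient hrow
  have hpivot : y s = pivotForm y s 0 := by simp [pivotForm]
  rw [← Nat.cast_succ]
  refine quotientPD_le_of_colon (x := X 0 s) ?_ ?_ <;> rw [Nat.cast_succ]
  · rw [colon_sup_span_singleton_mul hreg, hpivot]
    exact hA'.quotientPD_sup_pivotForm_le (fun _ => A'.zero_mem) hclear
  · have hle : Ideal.span {X 0 s * y s} ≤ Ideal.span {X 0 s} :=
      Ideal.span_singleton_le_span_singleton.2 (dvd_mul_right _ _)
    rw [sup_assoc, sup_of_le_right hle]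
    exact quotientPD_sup_span_singleton_le hreg htail

theorem IsGenericOver.quotientPD_sup_sum_insert_le [IsNoetherianRing S]
    {X : Matrix (Fin (n + 1)) κ S} (h : IsGenericOver A X y) {s : κ} {T : Finset κ} (hs : s ∉ T)
    (hT : T.Nonempty)
    (hsum : quotientPD (rowIdeal (X.submatrix Fin.succ id) y ⊔
      Ideal.span {∑ t ∈ T, X 0 t * y t}) ≤ d)
    (haway : quotientPD ((rowIdeal (X.submatrix Fin.succ id) y ⊔
      Ideal.span {∑ t ∈ insert s T, X 0 t * y t}).map
        (algebraMap S (Localization.Away (X 0 s)))) ≤ d) :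
    quotientPD (rowIdeal (X.submatrix Fin.succ id) y ⊔
      Ideal.span {∑ t ∈ insert s T, X 0 t * y t}) ≤ d := by
  obtain ⟨B, hB, hX, hy, hrow⟩ := h.exists_isVariable_entry s
  obtain ⟨_, htail⟩ := h.submatrix_succ
  refine quotientPD_le_of_away (h.isSMulRegular_entry htail.hasEqualColons hs hT) ?_ haway
  have hdvd : X 0 s ∣ ∑ t ∈ insert s T, X 0 t * y t - ∑ t ∈ T, X 0 t * y t :=
    ⟨y s, by rw [Finset.sum_insert hs, add_sub_cancel_right]⟩
  have hsup : Ideal.span {∑ t ∈ insert s T, X 0 t * y t} ⊔ Ideal.span {X 0 s} =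
      Ideal.span {∑ t ∈ T, X 0 t * y t} ⊔ Ideal.span {X 0 s} := by
    simpa only [Set.range_const] using
      span_range_sup_span_singleton_eq (m := Unit) (fun _ => hdvd)
  rw [sup_assoc, hsup, ← sup_assoc]
  refine quotientPD_sup_span_singleton_le (hB.isSMulRegular_quotient (hrow.sup ?_)) hsum
  exact isExtended_span (Set.singleton_subset_iff.2 (sum_mem fun t ht =>
    mul_mem (hX t (ne_of_mem_of_not_mem ht hs)) (hy t)))

end UpperBound

theorem IsGenericOver.quotientPD_rowIdeal_le {S : Type u} [CommRing S] [IsNoetherianRing S]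
    {κ : Type*} [Fintype κ] {A : Subring S} {n : ℕ} {X : Matrix (Fin n) κ S} {y : κ → S}
    (h : IsGenericOver A X y) : quotientPD (rowIdeal X y) ≤ n := by
  classical
  induction n generalizing S κ with
  | zero =>
    rw [rowIdeal_eq_bot]
    exact quotientPD_bot_le
  | succ n ih =>
    obtain ⟨_, htail⟩ := h.submatrix_succ
    have hsum (T : Finset κ) : quotientPD (rowIdeal (X.submatrix Fin.succ id) y ⊔
        Ideal.span {∑ t ∈ T, X 0 t * y t}) ≤ (n + 1 : ℕ) := by
      induction T using Finset.induction with
      | empty => simpa using (ih htail).trans (by exact_mod_cast Nat.le_succ n)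
      | insert s T hs hT =>
        obtain rfl | hne := T.eq_empty_or_nonempty
        · obtain ⟨_, hclear⟩ := htail.exists_clearColumn (s := s) (c := 0) fun _ => zero_mem _
          simpa using h.quotientPD_sup_entry_mul_le s (ih htail) (ih hclear)
        · obtain ⟨A', X', y', c, hA', -, hc, hpivot⟩ :=
            h.exists_pivotForm (Finset.mem_insert_self s T)
          obtain ⟨_, hclear⟩ := hA'.exists_clearColumn hc
          have : IsNoetherianRing (Localization.Away (X 0 s)) :=
            IsLocalization.isNoetherianRing (.powers (X 0 s)) _ ‹_›
          refine h.quotientPD_sup_sum_insert_le hs hne hT (hpivot ▸ ?_)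
          exact hA'.quotientPD_sup_pivotForm_le hc (ih hclear)
    rw [rowIdeal_succ]
    exact hsum Finset.univ

/-! ### The lower bound -/

section LowerBound

variable {S : Type u} [CommRing S] {κ : Type*} [Fintype κ] {A : Subring S} {y : κ → S} {n : ℕ}

theorem IsGenericOver.isSMulRegular_map_sum_mul [Nonempty κ] {X : Matrix (Fin (n + 1)) κ S}
    (h : IsGenericOver A X y) {T : Type*} [CommRing T] [Algebra S T] (M : Submonoid S)
    [IsLocalization M T] (hy : ∀ t, y t ∈ M) :
    IsSMulRegular (T ⧸ (rowIdeal (X.submatrix Fin.succ id) y).map (algebraMap S T))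
      (algebraMap S T (∑ t, X 0 t * y t)) := by
  classical
  obtain ⟨s⟩ := ‹Nonempty κ›
  obtain ⟨B, hB, hXB, hyB, hrow⟩ := h.exists_isVariable_entry s
  refine isSMulRegular_quotient_map M fun q hq => ?_
  rw [Fintype.sum_eq_add_sum_subtype_ne _ s] at hq
  obtain ⟨k, hk⟩ := hB.exists_pow_mul_mem hrow (hyB s)
    (sum_mem fun t : {t // t ≠ s} => fun _ => mul_mem (hXB t t.2) (hyB t)) hq
  exact ⟨_, pow_mem (hy s) k, hk⟩

theorem IsGenericOver.quotientPD_map_atPrime [IsNoetherianRing S] [Nonempty κ]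
    {X : Matrix (Fin n) κ S} (h : IsGenericOver A X y) (p : Ideal S) [p.IsPrime]
    (hX : ∀ i t, X i t ∈ p) (hy : ∀ t, y t ∉ p) :
    quotientPD ((rowIdeal X y).map (algebraMap S (Localization.AtPrime p))) = n := by
  induction n generalizing A with
  | zero => rw [rowIdeal_eq_bot, Ideal.map_bot, quotientPD_bot, Nat.cast_zero]
  | succ n ih =>
    obtain ⟨_, htail⟩ := h.submatrix_succ
    have hmem : ∑ t, X 0 t * y t ∈ p := sum_mem fun t _ => p.mul_mem_right _ (hX 0 t)
    rw [rowIdeal_succ, Ideal.map_sup, Ideal.map_span, Set.image_singleton,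
      quotientPD_sup_span_singleton_of_mem_maximalIdeal
        ((IsLocalization.AtPrime.to_map_mem_maximal_iff _ p _).2 hmem)
        (h.isSMulRegular_map_sum_mul p.primeCompl hy),
      ih htail fun i t => hX _ t, Nat.cast_succ]

theorem IsGenericOver.le_quotientPD_rowIdeal [IsNoetherianRing S] [Nontrivial S] [Nonempty κ]
    {X : Matrix (Fin n) κ S} (h : IsGenericOver A X y) : n ≤ quotientPD (rowIdeal X y) := by
  obtain ⟨p, hp, hmem⟩ := h.exists_isPrime (Sum.elim 0 1)
  have hX (i t) : X i t ∈ p := by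
    simpa [Function.uncurry] using hmem (Sum.inl (i, t))
  have hy (t) : y t ∉ p := fun ht => hp.one_notMem <| by
    simpa using p.sub_mem ht (hmem (Sum.inr t))
  rw [← h.quotientPD_map_atPrime p hX hy]
  exact quotientPD_map_le p.primeCompl _

end LowerBound

/-! ### Projective dimension of generic bilinear forms -/

theorem exists_injective_comp_eq_uncurry {M m : Type*} (l l' l'' : M) (a b c : m → M) :
    ∃ j : (m × Fin 3) ⊕ Fin 3 → Fin 3 ⊕ (m ⊕ (m ⊕ m)), Function.Injective j ∧
      Sum.elim ![l, l', l''] (Sum.elim a (Sum.elim b c)) ∘ j =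
        Sum.elim (Function.uncurry (Matrix.of fun i => ![a i, b i, c i])) ![l, l', l''] := by
  let j : (m × Fin 3) ⊕ Fin 3 → Fin 3 ⊕ (m ⊕ (m ⊕ m)) := Sum.elim
    (fun p => Sum.inr (![Sum.inl p.1, Sum.inr (Sum.inl p.1), Sum.inr (Sum.inr p.1)] p.2)) Sum.inl
  refine ⟨j, ?_, ?_⟩
  · rintro (⟨i, s⟩ | s) (⟨i', s'⟩ | s') h
    · fin_cases s <;> fin_cases s' <;> simp_all [j]
    all_goals simp_all [j]
  · ext1 (⟨i, s⟩ | s)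
    · fin_cases s <;> rfl
    · rfl

theorem exists_isGenericOver_of_linearIndependent {k σ m : Type*} [Field k]
    {l l' l'' : MvPolynomial σ k} (hl : l.IsHomogeneous 1) (hl' : l'.IsHomogeneous 1)
    (hl'' : l''.IsHomogeneous 1) {a b c : m → MvPolynomial σ k} (ha : ∀ i, (a i).IsHomogeneous 1)
    (hb : ∀ i, (b i).IsHomogeneous 1) (hc : ∀ i, (c i).IsHomogeneous 1)
    (hind : LinearIndependent k (Sum.elim ![l, l', l''] (Sum.elim a (Sum.elim b c)))) :
    ∃ A, IsGenericOver A (Matrix.of fun i => ![a i, b i, c i]) ![l, l', l''] := by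
  obtain ⟨j, hj, hcomp⟩ := exists_injective_comp_eq_uncurry l l' l'' a b c
  refine exists_isCoordinateFamily_of_linearIndependent ?_ (hcomp ▸ hind.comp j hj)
  rw [← hcomp]
  suffices hhom : ∀ i, (Sum.elim ![l, l', l''] (Sum.elim a (Sum.elim b c)) i).IsHomogeneous 1 from
    fun i => hhom (j i)
  rintro (s | i | i | i)
  · fin_cases s
    exacts [hl, hl', hl'']
  exacts [ha i, hb i, hc i]

theorem span_range_eq_rowIdeal {S m : Type*} [CommRing S] {l l' l'' : S} {a b c f : m → S}
    (hf : ∀ i, f i = a i * l + b i * l' + c i * l'') :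
    Ideal.span (Set.range f) =
      rowIdeal (Matrix.of fun i => ![a i, b i, c i]) ![l, l', l''] := by
  rw [rowIdeal]
  congr 2
  ext1 i
  rw [hf, Matrix.mulVec, dotProduct, Fin.sum_univ_three]
  rfl

theorem pd_eq_of_generic_three_linear_general {S : Type u} [CommRing S] [IsNoetherianRing S]
    [Nontrivial S] {κ : Type*} [Fintype κ] [Nonempty κ] {n : ℕ} {X : Matrix (Fin n) κ S}
    {y : κ → S} {A : Subring S} (h : IsGenericOver A X y) :
    projDim S (S ⧸ rowIdeal X y) = n :=
  projDim_eq_of_projectiveDimension_eq (h.quotientPD_rowIdeal_le.antisymm h.le_quotientPD_rowIdeal)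

/-- If `ℓ, ℓ', ℓ'', a_1, …, a_n, b_1, …, b_n, c_1, …, c_n` are linearly
independent linear forms, `f_i = a_i ℓ + b_i ℓ' + c_i ℓ''`, and `I = (f_1, …, f_n)`,
then `pd_S(S/I) = n`. -/
theorem pd_eq_of_generic_three_linear (k : Type u) [Field k] (N : ℕ) (n : ℕ)
    (l l' l'' : MvPolynomial (Fin N) k)
    (hl : l.IsHomogeneous 1) (hl' : l'.IsHomogeneous 1) (hl'' : l''.IsHomogeneous 1)
    (a b c : Fin n → MvPolynomial (Fin N) k)
    (ha : ∀ i, (a i).IsHomogeneous 1) (hb : ∀ i, (b i).IsHomogeneous 1)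
    (hc : ∀ i, (c i).IsHomogeneous 1)
    (hind : LinearIndependent k (Sum.elim ![l, l', l''] (Sum.elim a (Sum.elim b c))))
    (f : Fin n → MvPolynomial (Fin N) k)
    (hf : ∀ i, f i = a i * l + b i * l' + c i * l'')
    (I : Ideal (MvPolynomial (Fin N) k))
    (hI : I = Ideal.span (Set.range f)) :
    projDim (MvPolynomial (Fin N) k) (MvPolynomial (Fin N) k ⧸ I) = (n : ℕ∞) := by
  obtain ⟨A, hA⟩ := exists_isGenericOver_of_linearIndependent hl hl' hl'' ha hb hc hind
  rw [hI, span_range_eq_rowIdeal hf]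
  exact pd_eq_of_generic_three_linear_general hA
end

section
/- Let k be a field, S a polynomial ring over k, and I ⊆ S a homogeneous ideal of height 3 generated by quadrics. If I is not a complete intersection (i.e., I cannot be generated by 3 elements), then the Hilbert–Samuel multiplicity satisfies e(S/I) ≤ 6. -/
open CategoryTheory Opposite

universe u

/-!
Passing to the algebraic closure changes neither the Hilbert function nor the hypotheses, so let `K`
be an infinite field and induct on the number of variables, bounding the Hilbert series of `S/J`
coefficientwise by `p / (1 - t) ^ r` with `p(1) ≤ c`, where `r` is the dimension. Killing a general
linear form `l` keeps the height and reduces `r` by one.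

An ideal of height 3 generated by quadrics is not a complete intersection iff `dim J₂ ≥ 4`. If the
restriction of `J` to `l = 0` still has four independent quadrics, induction applies. Otherwise some
quadric of `J` factors as `l * m`; then `J` has the multiplicity of a quotient of `S/(J + (m))`,
which is at most 4, since modulo `m` the ideal still has height at least 2.

In the Artinian case the bounds 4 = 1 + 2 + 1 and 6 = 1 + 3 + 2 come from `(S/J)₃ = 0`. A nonzero
functional on `(S/J)₃` would pair `S₁` with `(S/J)₂`, whose dimension is smaller than the number of
variables; a linear form `l` in the left kernel then gives a nonzero functional on `(S/(J + (l)))₃`,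
contradicting the case of one variable less.
-/

namespace QuadricIdeal

section GrowthBound

open Polynomial Filter

/-- The numerical function `g` is bounded by the Hilbert function of a graded module of dimension
`r` and multiplicity at most `c`, in the sense that it is dominated coefficientwise by a series
`p / (1 - X) ^ r` with `p 1 ≤ c`. This bound is stable under the exact sequences relating a graded
quotient to its hyperplane sections. -/
def HasGrowthLE (g : ℕ → ℕ) (r : ℕ) (c : ℚ) : Prop :=
  ∃ p : ℚ[X], p.eval 1 ≤ c ∧ ∀ d, (g d : ℚ) ≤
    PowerSeries.coeff d ((p : PowerSeries ℚ) * (PowerSeries.invOneSubPow ℚ r : PowerSeries ℚ))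

theorem invOneSubPow_succ_mul_one_sub (r : ℕ) :
    (PowerSeries.invOneSubPow ℚ (r + 1) : PowerSeries ℚ) * (1 - PowerSeries.X) =
      (PowerSeries.invOneSubPow ℚ r : PowerSeries ℚ) := by
  rw [← PowerSeries.one_sub_pow_mul_invOneSubPow_val_add_eq_invOneSubPow_val ℚ r 1, pow_one,
    mul_comm]

namespace HasGrowthLE

variable {g g₁ g₂ : ℕ → ℕ} {r : ℕ} {c c' : ℚ}

theorem mono (h : HasGrowthLE g₁ r c) (hg : ∀ d, g d ≤ g₁ d) (hc : c ≤ c') :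
    HasGrowthLE g r c' := by
  obtain ⟨p, hp, hb⟩ := h
  exact ⟨p, hp.trans hc, fun d ↦ (Nat.cast_le.2 (hg d)).trans (hb d)⟩

theorem of_eventually_zero {m : ℕ} (h : ∀ d, m ≤ d → g d = 0)
    (hc : ((∑ i ∈ Finset.range m, g i : ℕ) : ℚ) ≤ c) : HasGrowthLE g 0 c := by
  refine ⟨∑ i ∈ Finset.range m, C (g i : ℚ) * X ^ i, ?_, fun d ↦ ?_⟩
  · simpa [eval_finsetSum] using hc
  · rw [PowerSeries.invOneSubPow_zero, Units.val_one, mul_one, coeff_coe, finsetSum_coeff]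
    obtain hd | hd := lt_or_ge d m
    · simp [coeff_X_pow, hd]
    · simp [coeff_X_pow, h d hd]

theorem add (h₁ : HasGrowthLE g₁ (r + 1) c) (h₂ : HasGrowthLE g₂ r c') (h0 : g 0 ≤ g₂ 0)
    (hs : ∀ d, g (d + 1) ≤ g₂ (d + 1) + g₁ d) : HasGrowthLE g (r + 1) c := by
  obtain ⟨p₁, hp₁, hb₁⟩ := h₁
  obtain ⟨p₂, -, hb₂⟩ := h₂
  refine ⟨X * p₁ + (1 - X) * p₂, by simpa using hp₁, fun d ↦ ?_⟩
  have hsum : ((X * p₁ + (1 - X) * p₂ : ℚ[X]) : PowerSeries ℚ) *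
      (PowerSeries.invOneSubPow ℚ (r + 1) : PowerSeries ℚ) =
      (p₁ : PowerSeries ℚ) * (PowerSeries.invOneSubPow ℚ (r + 1) : PowerSeries ℚ) *
        PowerSeries.X + (p₂ : PowerSeries ℚ) * (PowerSeries.invOneSubPow ℚ r : PowerSeries ℚ) := by
    rw [← invOneSubPow_succ_mul_one_sub r]
    push_cast
    ring
  rw [hsum, map_add]
  cases d with
  | zero =>
    rw [PowerSeries.coeff_zero_mul_X, zero_add]
    exact (Nat.cast_le.2 h0).trans (hb₂ 0)
  | succ d =>
    rw [PowerSeries.coeff_succ_mul_X]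
    have : (g (d + 1) : ℚ) ≤ g₂ (d + 1) + g₁ d := mod_cast hs d
    linarith [hb₂ (d + 1), hb₁ d]

theorem sum (h : HasGrowthLE g₁ r c) (h0 : g 0 ≤ g₁ 0) (hs : ∀ d, g (d + 1) ≤ g₁ (d + 1) + g d) :
    HasGrowthLE g (r + 1) c := by
  obtain ⟨p, hp, hb⟩ := h
  refine ⟨p, hp, fun d ↦ ?_⟩
  have hstep : (p : PowerSeries ℚ) * (PowerSeries.invOneSubPow ℚ (r + 1) : PowerSeries ℚ) =
      (p : PowerSeries ℚ) * (PowerSeries.invOneSubPow ℚ (r + 1) : PowerSeries ℚ) * PowerSeries.X +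
        (p : PowerSeries ℚ) * (PowerSeries.invOneSubPow ℚ r : PowerSeries ℚ) := by
    rw [← invOneSubPow_succ_mul_one_sub r]
    ring
  induction d with
  | zero =>
    rw [hstep, map_add, PowerSeries.coeff_zero_mul_X, zero_add]
    exact (Nat.cast_le.2 h0).trans (hb 0)
  | succ d ih =>
    rw [hstep, map_add, PowerSeries.coeff_succ_mul_X]
    have : (g (d + 1) : ℚ) ≤ g₁ (d + 1) + g d := mod_cast hs d
    linarith [hb (d + 1)]

end HasGrowthLE

theorem natDegree_hilbertPoly_succ_le (p : ℚ[X]) (r : ℕ) :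
    (hilbertPoly p (r + 1)).natDegree ≤ r := by
  rw [hilbertPoly_succ]
  exact natDegree_sum_le_of_forall_le _ _ fun i _ ↦
    (natDegree_smul_le _ _).trans (natDegree_preHilbertPoly ℚ r i).le

theorem coeff_hilbertPoly_succ_self (p : ℚ[X]) (r : ℕ) :
    (hilbertPoly p (r + 1)).coeff r = p.eval 1 / r.factorial := by
  rw [hilbertPoly_succ, finsetSum_coeff, eval_eq_sum, Polynomial.sum, Finset.sum_div]
  refine Finset.sum_congr rfl fun i _ ↦ ?_
  rw [coeff_smul, coeff_preHilbertPoly_self]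
  simp [div_eq_mul_inv]

theorem factorial_mul_coeff_hilbertPoly_le {r m : ℕ} {c : ℚ} (hc : 0 ≤ c) (hrm : r ≤ m + 1)
    {p : ℚ[X]} (hp : p.eval 1 ≤ c) : m.factorial * (hilbertPoly p r).coeff m ≤ c := by
  obtain _ | r := r
  · simpa [hilbertPoly_zero_right] using hc
  obtain rfl | hlt := (Nat.le_of_succ_le_succ hrm).eq_or_lt
  · rwa [coeff_hilbertPoly_succ_self, mul_div_cancel₀ _ (by positivity)]
  · simpa [coeff_eq_zero_of_natDegree_lt ((natDegree_hilbertPoly_succ_le p r).trans_lt hlt)]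

theorem natDegree_hilbertPoly_le {r m : ℕ} (hrm : r ≤ m + 1) (p : ℚ[X]) :
    (hilbertPoly p r).natDegree ≤ m := by
  obtain _ | r := r
  · simp [hilbertPoly_zero_right]
  · exact (natDegree_hilbertPoly_succ_le p r).trans (Nat.le_of_succ_le_succ hrm)

theorem coeff_nonneg_of_eventually_nonneg {G : ℚ[X]} {m : ℕ} (hm : G.natDegree ≤ m)
    (hG : ∀ᶠ d : ℕ in atTop, 0 ≤ G.eval (d : ℚ)) : 0 ≤ G.coeff m := by
  obtain hlt | rfl := hm.lt_or_eq
  · exact (coeff_eq_zero_of_natDegree_lt hlt).ge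
  by_contra! hneg
  obtain hdeg | hdeg := lt_or_ge 0 G.degree
  · obtain ⟨d, hd, hd'⟩ := (hG.and (((G.tendsto_atBot_of_leadingCoeff_nonpos hdeg hneg.le).comp
      tendsto_natCast_atTop_atTop).eventually_lt_atBot 0)).exists
    exact hd.not_gt hd'
  · obtain ⟨d, hd⟩ := hG.exists
    rw [eq_C_of_degree_le_zero hdeg, eval_C] at hd
    rw [natDegree_eq_zero_iff_degree_le_zero.2 hdeg] at hneg
    exact hd.not_gt hneg

theorem coeff_le_coeff_of_eventually_le {F G : ℚ[X]} {m : ℕ} (hF : F.natDegree ≤ m)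
    (hG : G.natDegree ≤ m) (h : ∀ᶠ d : ℕ in atTop, F.eval (d : ℚ) ≤ G.eval (d : ℚ)) :
    F.coeff m ≤ G.coeff m := by
  rw [← sub_nonneg, ← coeff_sub]
  refine coeff_nonneg_of_eventually_nonneg ((natDegree_sub_le _ _).trans (max_le hG hF)) ?_
  filter_upwards [h] with d hd
  simpa using hd

theorem HasGrowthLE.factorial_mul_leadingCoeff_le {g : ℕ → ℕ} {r : ℕ} {c : ℚ}
    (h : HasGrowthLE g r c) (hc : 0 ≤ c) {P : ℚ[X]}
    (hP : ∀ᶠ d : ℕ in atTop, (g d : ℚ) = P.eval (d : ℚ)) (hr : r ≤ P.natDegree + 1) :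
    P.natDegree.factorial * P.leadingCoeff ≤ c := by
  obtain ⟨p, hp, hb⟩ := h
  refine le_trans ?_ (factorial_mul_coeff_hilbertPoly_le hc hr hp)
  gcongr
  refine coeff_le_coeff_of_eventually_le le_rfl (natDegree_hilbertPoly_le hr p) ?_
  filter_upwards [hP, eventually_gt_atTop p.natDegree] with d hd hpd
  rw [← hd, ← coeff_mul_invOneSubPow_eq_hilbertPoly_eval r hpd]
  exact hb d

theorem le_natDegree_add_one_of_multichoose_le {g : ℕ → ℕ} {r : ℕ} {P : ℚ[X]}
    (hP : ∀ᶠ d : ℕ in atTop, (g d : ℚ) = P.eval (d : ℚ)) (hg : ∀ d, r.multichoose d ≤ g d) :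
    r ≤ P.natDegree + 1 := by
  obtain _ | r := r
  · exact Nat.zero_le _
  by_contra! hlt
  have hcoeff := coeff_le_coeff_of_eventually_le (natDegree_preHilbertPoly ℚ r 0).le
    (by omega : P.natDegree ≤ r) (by
      filter_upwards [hP] with d hd
      rw [← hd, preHilbertPoly_eq_choose_sub_add ℚ r d.zero_le, Nat.sub_zero,
        ← Nat.choose_symm_add]
      have hgd := hg d
      rw [Nat.multichoose_eq, show r + 1 + d - 1 = d + r by omega] at hgd
      exact_mod_cast hgd)
  rw [coeff_preHilbertPoly_self, coeff_eq_zero_of_natDegree_lt (by omega)] at hcoeff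
  have : (0 : ℚ) < (r.factorial : ℚ)⁻¹ := by positivity
  exact this.not_ge hcoeff

end GrowthBound

open MvPolynomial Module

attribute [local instance] MvPolynomial.gradedAlgebra

section LinearAlgebra

variable {K V W W' : Type*} [Field K] [AddCommGroup V] [Module K V] [AddCommGroup W] [Module K W]
  [AddCommGroup W'] [Module K W']

theorem finrank_map_add_finrank_inf_ker (f : V →ₗ[K] W) (U : Submodule K V)
    [FiniteDimensional K U] :
    finrank K (U.map f) + finrank K ↥(U ⊓ LinearMap.ker f) = finrank K U := by
  have hker : U ⊓ LinearMap.ker f = (LinearMap.ker (f.domRestrict U)).map U.subtype := by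
    ext x
    simp [and_comm]
  rw [← LinearMap.finrank_range_add_finrank_ker (f.domRestrict U), LinearMap.range_domRestrict,
    hker, Submodule.finrank_map_subtype_eq]

theorem finrank_map_le_finrank_map (f : V →ₗ[K] W) (g : V →ₗ[K] W') (U : Submodule K V)
    [FiniteDimensional K U] (h : U ⊓ LinearMap.ker g ≤ LinearMap.ker f) :
    finrank K (U.map f) ≤ finrank K (U.map g) := by
  have hf := finrank_map_add_finrank_inf_ker f U
  have hg := finrank_map_add_finrank_inf_ker g U
  have := Submodule.finiteDimensional_of_le (inf_le_left : U ⊓ LinearMap.ker f ≤ U)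
  have hle := Submodule.finrank_mono (le_inf inf_le_left h)
  omega

theorem exists_fin_span_range_eq (U : Submodule K V) [FiniteDimensional K U] {m : ℕ}
    (h : finrank K U ≤ m) : ∃ v : Fin m → V, Submodule.span K (Set.range v) = U := by
  refine ⟨Function.extend (Fin.castLE h) (fun i ↦ (finBasis K U i : V)) 0, ?_⟩
  have hspan : Submodule.span K (Set.range fun i ↦ (finBasis K U i : V)) = U := by
    rw [Set.range_comp' Subtype.val, ← U.coe_subtype, ← Submodule.map_span, Basis.span_eq,
      Submodule.map_subtype_top]
  rw [Set.range_extend (Fin.castLE_injective h), Submodule.span_union, hspan, sup_eq_left,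
    Submodule.span_le]
  rintro _ ⟨_, _, rfl⟩
  exact U.zero_mem

end LinearAlgebra

section GradedPart

variable {K : Type*} [Field K] {n m : ℕ} {J J' : Ideal (MvPolynomial (Fin n) K)} {d e : ℕ}

/-- The graded piece `J_d`: the `K`-space of forms of degree `d` in the ideal `J`. -/
noncomputable def gradedPart (J : Ideal (MvPolynomial (Fin n) K)) (d : ℕ) :
    Submodule K (MvPolynomial (Fin n) K) :=
  homogeneousSubmodule (Fin n) K d ⊓ J.restrictScalars K

theorem mem_gradedPart {p : MvPolynomial (Fin n) K} :
    p ∈ gradedPart J d ↔ p.IsHomogeneous d ∧ p ∈ J := by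
  simp [gradedPart]

theorem gradedPart_eq_inf_ker (J : Ideal (MvPolynomial (Fin n) K)) (d : ℕ) :
    gradedPart J d =
      homogeneousSubmodule (Fin n) K d ⊓ LinearMap.ker (Ideal.Quotient.mkₐ K J).toLinearMap := by
  ext p
  simp [gradedPart, Ideal.Quotient.eq_zero_iff_mem]

instance finiteDimensional_homogeneousSubmodule (d : ℕ) :
    FiniteDimensional K (homogeneousSubmodule (Fin n) K d) :=
  Module.Finite.iff_fg.mpr (homogeneousSubmodule_fg (σ := Fin n) (R := K) d)

instance finiteDimensional_gradedPart (J : Ideal (MvPolynomial (Fin n) K)) (d : ℕ) :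
    FiniteDimensional K (gradedPart J d) :=
  Submodule.finiteDimensional_of_le inf_le_left

theorem finrank_homogeneousSubmodule (d : ℕ) :
    finrank K (homogeneousSubmodule (Fin n) K d) = n.multichoose d := by
  have hs : {f : Fin n →₀ ℕ | f.degree = d} = ((Finset.univ : Finset (Fin n)).finsuppAntidiag d :
      Set (Fin n →₀ ℕ)) := by
    ext f
    simp [Finsupp.degree_eq_sum]
  rw [homogeneousSubmodule_eq_finsupp_supported,
    (AddMonoidAlgebra.supportedEquivFinsupp {f : Fin n →₀ ℕ | f.degree = d}).finrank_eq, hs,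
    Module.finrank_finsupp_self]
  simp [Finset.card_finsuppAntidiag_nat_eq_multichoose]

theorem hilbertFunction_add_finrank_gradedPart (J : Ideal (MvPolynomial (Fin n) K)) (d : ℕ) :
    hilbertFunction K J d + finrank K (gradedPart J d) = n.multichoose d := by
  rw [gradedPart_eq_inf_ker, ← finrank_homogeneousSubmodule (K := K)]
  exact finrank_map_add_finrank_inf_ker _ _

theorem hilbertFunction_le_of_linearMap {A : Ideal (MvPolynomial (Fin n) K)}
    {B : Ideal (MvPolynomial (Fin m) K)} (g : MvPolynomial (Fin n) K →ₗ[K] MvPolynomial (Fin m) K)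
    (hg : ∀ p, p.IsHomogeneous d → (g p).IsHomogeneous e)
    (hAB : ∀ p, p.IsHomogeneous d → g p ∈ B → p ∈ A) :
    hilbertFunction K A d ≤ hilbertFunction K B e := by
  calc hilbertFunction K A d
      ≤ finrank K ((homogeneousSubmodule (Fin n) K d).map
          ((Ideal.Quotient.mkₐ K B).toLinearMap ∘ₗ g)) := by
        refine finrank_map_le_finrank_map _ _ _ fun p hp ↦ ?_
        simp only [Submodule.mem_inf, LinearMap.mem_ker, LinearMap.comp_apply,
          AlgHom.toLinearMap_apply, Ideal.Quotient.mkₐ_eq_mk, Ideal.Quotient.eq_zero_iff_mem]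
          at hp ⊢
        exact hAB p hp.1 hp.2
    _ ≤ hilbertFunction K B e := by
        rw [Submodule.map_comp]
        exact Submodule.finrank_mono (Submodule.map_mono (Submodule.map_le_iff_le_comap.2 hg))

theorem hilbertFunction_eq_add_finrank_map (h : J ≤ J') (d : ℕ) :
    hilbertFunction K J d = hilbertFunction K J' d +
      finrank K ((gradedPart J' d).map (Ideal.Quotient.mkₐ K J).toLinearMap) := by
  have hJ := hilbertFunction_add_finrank_gradedPart J d
  have hJ' := hilbertFunction_add_finrank_gradedPart J' d
  have hmap := finrank_map_add_finrank_inf_ker (Ideal.Quotient.mkₐ K J).toLinearMap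
    (gradedPart J' d)
  have hinf : gradedPart J' d ⊓ LinearMap.ker (Ideal.Quotient.mkₐ K J).toLinearMap =
      gradedPart J d := by
    ext p
    have hp : p ∈ J → p ∈ J' := @h p
    simp only [Submodule.mem_inf, mem_gradedPart, LinearMap.mem_ker, AlgHom.toLinearMap_apply,
      Ideal.Quotient.mkₐ_eq_mk, Ideal.Quotient.eq_zero_iff_mem]
    tauto
  rw [hinf] at hmap
  omega

theorem hilbertFunction_eq_zero_iff :
    hilbertFunction K J d = 0 ↔ ∀ p : MvPolynomial (Fin n) K, p.IsHomogeneous d → p ∈ J := by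
  rw [hilbertFunction, Submodule.finrank_eq_zero, ← le_bot_iff, Submodule.map_le_iff_le_comap]
  simp [SetLike.le_def, Ideal.Quotient.eq_zero_iff_mem]

theorem hilbertFunction_eq_zero_of_le (h : hilbertFunction K J d = 0) (hde : d ≤ e) :
    hilbertFunction K J e = 0 := by
  rw [hilbertFunction_eq_zero_iff] at h ⊢
  intro p hp
  obtain ⟨i, rfl⟩ := Nat.exists_eq_add_of_le hde
  rw [← mem_homogeneousSubmodule, ← homogeneousSubmodule_one_pow, pow_add,
    homogeneousSubmodule_one_pow, homogeneousSubmodule_one_pow] at hp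
  exact Submodule.mul_induction_on hp (fun a ha b _ ↦ J.mul_mem_right b (h a ha))
    fun _ _ ↦ J.add_mem

theorem exists_add_mul_of_mem_gradedPart_sup (hJ : J.IsHomogeneous (homogeneousSubmodule (Fin n) K))
    {l p : MvPolynomial (Fin n) K} (hl : l.IsHomogeneous e)
    (hp : p ∈ gradedPart (J ⊔ Ideal.span {l}) (d + e)) :
    ∃ a ∈ J, ∃ s : MvPolynomial (Fin n) K, s.IsHomogeneous d ∧ a + l * s = p := by
  obtain ⟨hpd, hp⟩ := mem_gradedPart.1 hp
  obtain ⟨a, ha, b, hb, rfl⟩ := Submodule.mem_sup.1 hp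
  obtain ⟨s, rfl⟩ := Ideal.mem_span_singleton.1 hb
  refine ⟨homogeneousComponent (d + e) a, homogeneousComponent_mem_of_mem hJ ha _,
    homogeneousComponent d s, homogeneousComponent_isHomogeneous d s, ?_⟩
  have hmul : homogeneousComponent (d + e) (l * s) = l * homogeneousComponent d s := by
    rw [← decomposition.decompose'_apply, ← decomposition.decompose'_apply, add_comm]
    exact DirectSum.coe_decompose_mul_add_of_left_mem (homogeneousSubmodule (Fin n) K) hl
  rw [← hmul, ← map_add, homogeneousComponent_eq_self hpd]

theorem hilbertFunction_add_le (hJ : J.IsHomogeneous (homogeneousSubmodule (Fin n) K))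
    {l : MvPolynomial (Fin n) K} (hl : l.IsHomogeneous e) (h : ∀ p ∈ J', l * p ∈ J) (d : ℕ) :
    hilbertFunction K J (d + e) ≤
      hilbertFunction K (J ⊔ Ideal.span {l}) (d + e) + hilbertFunction K J' d := by
  rw [hilbertFunction_eq_add_finrank_map (le_sup_left : J ≤ J ⊔ Ideal.span {l})]
  gcongr
  calc finrank K ((gradedPart (J ⊔ Ideal.span {l}) (d + e)).map
        (Ideal.Quotient.mkₐ K J).toLinearMap)
      ≤ finrank K ((homogeneousSubmodule (Fin n) K d).map
          ((Ideal.Quotient.mkₐ K J).toLinearMap ∘ₗ LinearMap.mulLeft K l)) := by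
        apply Submodule.finrank_mono
        rintro _ ⟨p, hp, rfl⟩
        obtain ⟨a, ha, s, hs, rfl⟩ := exists_add_mul_of_mem_gradedPart_sup hJ hl hp
        exact ⟨s, hs, by simp [Ideal.Quotient.eq_zero_iff_mem.2 ha]⟩
    _ ≤ hilbertFunction K J' d := by
        refine finrank_map_le_finrank_map _ _ _ fun p hp ↦ ?_
        simp only [Submodule.mem_inf, LinearMap.mem_ker, AlgHom.toLinearMap_apply,
          LinearMap.comp_apply, LinearMap.mulLeft_apply, Ideal.Quotient.mkₐ_eq_mk,
          Ideal.Quotient.eq_zero_iff_mem] at hp ⊢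
        exact h p hp.2

theorem hilbertFunction_zero_le (hJ : J.IsHomogeneous (homogeneousSubmodule (Fin n) K))
    {l : MvPolynomial (Fin n) K} (hl : l.IsHomogeneous e) (he : e ≠ 0) :
    hilbertFunction K J 0 ≤ hilbertFunction K (J ⊔ Ideal.span {l}) 0 := by
  refine hilbertFunction_le_of_linearMap LinearMap.id (fun _ hp ↦ hp) fun p hp hpJ ↦ ?_
  obtain ⟨a, ha, b, hb, hab⟩ := Submodule.mem_sup.1 hpJ
  obtain ⟨s, rfl⟩ := Ideal.mem_span_singleton.1 hb
  have hl0 : constantCoeff l = 0 := hl.coeff_eq_zero (by simpa using he.symm)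
  have hls : homogeneousComponent 0 (l * s) = 0 := by
    rw [homogeneousComponent_zero, ← constantCoeff_eq, map_mul, hl0, zero_mul, map_zero]
  have hpa : homogeneousComponent 0 a = p := by
    rw [← homogeneousComponent_eq_self hp, ← LinearMap.id_apply (R := K) p, ← hab, map_add, hls,
      add_zero]
  exact hpa ▸ homogeneousComponent_mem_of_mem hJ ha 0

end GradedPart

section Height

theorem le_height_iff {R : Type*} [CommRing R] {J : Ideal R} {h : ℕ∞} :
    h ≤ J.height ↔ ∀ P : Ideal R, P.IsPrime → J ≤ P → h ≤ P.height := by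
  refine ⟨fun hh P _ hP ↦ hh.trans (Ideal.height_mono hP), fun hh ↦ ?_⟩
  rw [Ideal.height_eq_inf_minimalPrimes]
  exact le_iInf₂ fun P hP ↦ hh P hP.isPrime hP.1.2

theorem heightENat_eq_height {R : Type*} [CommRing R] (J : Ideal R) :
    J.heightENat = J.height := by
  refine le_antisymm (le_height_iff.2 fun P hP hJ ↦ ?_) (le_iInf₂ fun p hp ↦ ?_)
  · exact (iInf₂_le (⟨P, hP⟩ : PrimeSpectrum R) hJ).trans_eq
      (PrimeSpectrum.height_eq_orderHeight ⟨P, hP⟩).symm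
  · rw [← PrimeSpectrum.height_eq_orderHeight]
    exact Ideal.height_mono hp

theorem height_le_height_map {R S : Type*} [CommRing R] [CommRing S] [Algebra R S]
    [IsNoetherianRing R] [IsNoetherianRing S] [Algebra.HasGoingDown R S] (J : Ideal R) :
    J.height ≤ (J.map (algebraMap R S)).height := by
  refine le_height_iff.2 fun P _ hJP ↦
    (Ideal.height_mono (Ideal.map_le_iff_le_comap.1 hJP)).trans ?_
  rw [Ideal.height_eq_height_add_of_liesOver_of_hasGoingDown (P.under R) P]
  exact le_self_add

theorem height_sup_span_singleton_le {R S : Type*} [CommRing R] [IsNoetherianRing R] [CommRing S]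
    {φ : R →+* S} (hφ : Function.Surjective φ) {l : R} (hker : RingHom.ker φ = Ideal.span {l})
    (J : Ideal R) : (J ⊔ Ideal.span {l}).height ≤ (J.map φ).height + 1 := by
  rw [← tsub_le_iff_right, le_height_iff]
  intro P hP hJP
  have hl : l ∈ P.comap φ := by
    have : l ∈ RingHom.ker φ := hker ▸ Ideal.mem_span_singleton_self l
    simp [RingHom.mem_ker.1 this]
  have hsup : J ⊔ Ideal.span {l} ≤ P.comap φ :=
    sup_le (Ideal.map_le_iff_le_comap.1 hJP) ((Ideal.span_singleton_le_iff_mem _).2 hl)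
  let ε : (R ⧸ Ideal.span {l}) ≃+* S :=
    (Ideal.quotEquivOfEq hker.symm).trans (RingHom.quotientKerEquivOfSurjective hφ)
  have hheight : ((P.comap φ).map (Ideal.Quotient.mk (Ideal.span {l}))).height = P.height := by
    have hcomap : P.comap φ = (P.comap ε).comap (Ideal.Quotient.mk (Ideal.span {l})) := rfl
    rw [hcomap, Ideal.map_comap_of_surjective _ Ideal.Quotient.mk_surjective,
      RingEquiv.height_comap]
  rw [tsub_le_iff_right, ← hheight]
  exact (Ideal.height_mono hsup).trans (Ideal.height_le_height_add_one_of_mem hl)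

theorem add_one_le_height_sup_span_singleton {R : Type*} [CommRing R] [IsNoetherianRing R]
    {J : Ideal R} {h : ℕ∞} (hJ : h ≤ J.height) {l : R}
    (hl : ∀ P ∈ J.minimalPrimes, l ∈ P → h + 1 ≤ P.height) :
    h + 1 ≤ (J ⊔ Ideal.span {l}).height := by
  refine le_height_iff.2 fun P' _ hJP' ↦ ?_
  obtain ⟨hJP', hlP'⟩ := sup_le_iff.1 hJP'
  obtain ⟨P, hP, hPP'⟩ := Ideal.exists_minimalPrimes_le hJP'
  have := hP.isPrime
  by_cases hlP : l ∈ P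
  · exact (hl P hP hlP).trans (Ideal.height_mono hPP')
  · have hlt : P < P' := lt_of_le_of_ne hPP' fun h ↦ hlP (h ▸
      (Ideal.span_singleton_le_iff_mem _).1 hlP')
    exact (add_le_add_left (le_height_iff.1 hJ P hP.isPrime hP.1.2) 1).trans
      (Ideal.height_add_one_le_of_lt_of_isPrime hlt)

theorem exists_mem_forall_notMem_of_finite {K S : Type*} [Field K] [Infinite K] [CommRing S]
    [Algebra K S] {T : Set (Ideal S)} (hT : T.Finite) {V : Submodule K S}
    (hV : ∀ P ∈ T, ¬ V ≤ P.restrictScalars K) : ∃ v ∈ V, ∀ P ∈ T, v ∉ P := by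
  have := hT.to_subtype
  obtain ⟨v, hv⟩ := Submodule.exists_forall_notMem_of_forall_ne_top
    (fun P : T ↦ (P.1.restrictScalars K).comap V.subtype) fun P h ↦
      hV P P.2 (Submodule.comap_subtype_eq_top.1 h)
  exact ⟨v, v.2, fun P hP ↦ hv ⟨P, hP⟩⟩

end Height

section PolynomialHeight

variable {K : Type*} [Field K] {n : ℕ}

theorem finSuccEquiv_rename_cons {r : ℕ} (ι : Fin r → Fin n) (f : MvPolynomial (Fin (r + 1)) K) :
    finSuccEquiv K n (rename (Fin.cons 0 (Fin.succ ∘ ι)) f) =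
      Polynomial.mapAlgHom (rename ι) (finSuccEquiv K r f) := by
  have h : ((finSuccEquiv K n).toAlgHom.comp (rename (Fin.cons 0 (Fin.succ ∘ ι)))) =
      (Polynomial.mapAlgHom (rename ι)).comp (finSuccEquiv K r).toAlgHom := by
    refine algHom_ext fun i ↦ ?_
    cases i using Fin.cases <;> simp [finSuccEquiv_X_zero, finSuccEquiv_X_succ]
  exact DFunLike.congr_fun h f

theorem finSuccEquiv_rename_succ {r : ℕ} (ι : Fin r → Fin n) (f : MvPolynomial (Fin r) K) :
    finSuccEquiv K n (rename (Fin.succ ∘ ι) f) = Polynomial.C (rename ι f) := by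
  have h : (finSuccEquiv K n).toAlgHom.comp (rename (Fin.succ ∘ ι)) =
      Polynomial.CAlgHom.comp (rename ι) :=
    algHom_ext fun i ↦ by simp [finSuccEquiv_X_succ]
  exact DFunLike.congr_fun h f

/- Induction on the number of variables: the contraction `p` of `P` to `n` variables either extends
to `P`, and the extra variable is free modulo `P`, or extends to a strictly smaller prime, and the
height goes up. -/
theorem exists_rename_mem_imp_eq_zero (P : Ideal (MvPolynomial (Fin n) K)) [P.IsPrime] :
    ∃ r, ∃ ι : Fin r → Fin n, (n : ℕ∞) ≤ r + P.height ∧ ∀ f, rename ι f ∈ P → f = 0 := by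
  induction n with
  | zero =>
    refine ⟨0, id, by simp, fun f hf ↦ ?_⟩
    by_contra hne
    obtain ⟨c, rfl⟩ := C_surjective (R := K) (Fin 0) f
    refine ‹P.IsPrime›.ne_top (Ideal.eq_top_of_isUnit_mem _ hf ?_)
    simpa using hne
  | succ n ih =>
    let P' : Ideal (Polynomial (MvPolynomial (Fin n) K)) :=
      P.comap (finSuccEquiv K n).symm.toRingEquiv
    have hheight : P'.height = P.height := RingEquiv.height_comap _ P
    have hmem {f} : f ∈ P ↔ finSuccEquiv K n f ∈ P' := by simp [P', Ideal.mem_comap]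
    have : P'.IsPrime := Ideal.comap_isPrime _ P
    set p := P'.comap Polynomial.C
    obtain ⟨r, ι, hr, hι⟩ := ih p
    have hC : p.height ≤ (p.map Polynomial.C).height :=
      height_le_height_map (S := Polynomial (MvPolynomial (Fin n) K)) p
    rcases (Ideal.map_comap_le (f := Polynomial.C) (K := P')).eq_or_lt with heq | hlt
    · refine ⟨r + 1, Fin.cons 0 (Fin.succ ∘ ι), ?_, fun f hf ↦ ?_⟩
      · rw [heq, hheight] at hC
        calc ((n + 1 : ℕ) : ℕ∞) ≤ r + P.height + 1 := by push_cast; grw [hr, hC]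
          _ = (r + 1 : ℕ) + P.height := by push_cast; ring
      · rw [hmem, finSuccEquiv_rename_cons, ← heq, Ideal.mem_map_C_iff] at hf
        refine (finSuccEquiv K r).injective (Polynomial.ext fun i ↦ ?_)
        simpa using hι _ (by simpa [p] using hf i)
    · have : (p.map Polynomial.C).IsPrime := Ideal.isPrime_map_C_of_isPrime
      have hlt := Ideal.height_add_one_le_of_lt_of_isPrime hlt
      refine ⟨r, Fin.succ ∘ ι, ?_, fun f hf ↦ hι f ?_⟩
      · calc ((n + 1 : ℕ) : ℕ∞) ≤ r + ((p.map Polynomial.C).height + 1) := by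
              push_cast; grw [hr, hC, add_assoc]
          _ ≤ r + P.height := by grw [hlt, hheight]
      · rwa [hmem, finSuccEquiv_rename_succ] at hf

theorem le_height_of_X_mem {P : Ideal (MvPolynomial (Fin n) K)} [P.IsPrime]
    (hX : ∀ i, X i ∈ P) : (n : ℕ∞) ≤ P.height := by
  obtain ⟨r, ι, hr, hι⟩ := exists_rename_mem_imp_eq_zero P
  obtain rfl : r = 0 := by
    by_contra hr0
    refine X_ne_zero (R := K) (⟨0, Nat.pos_of_ne_zero hr0⟩ : Fin r) (hι _ ?_)
    rw [rename_X]
    exact hX _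
  simpa using hr

theorem multichoose_le_hilbertFunction {J : Ideal (MvPolynomial (Fin n) K)} {h r : ℕ}
    (hJ : J.height = h) (hr : r + h ≤ n) (d : ℕ) : r.multichoose d ≤ hilbertFunction K J d := by
  obtain ⟨P, _, hJP, hP⟩ := Ideal.exists_isPrime_height_eq hJ
  obtain ⟨s, ι, hs, hι⟩ := exists_rename_mem_imp_eq_zero P
  rw [hP] at hs
  have hrs : r ≤ s := by
    have : n ≤ s + h := by exact_mod_cast hs
    omega
  have hbot : gradedPart (⊥ : Ideal (MvPolynomial (Fin r) K)) d = ⊥ :=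
    eq_bot_iff.2 fun p hp ↦ (mem_gradedPart.1 hp).2
  rw [← hilbertFunction_add_finrank_gradedPart (K := K) ⊥ d, hbot, finrank_bot, add_zero]
  refine hilbertFunction_le_of_linearMap (rename (ι ∘ Fin.castLE hrs)).toLinearMap
    (fun p hp ↦ hp.rename_isHomogeneous) fun p _ hp ↦ ?_
  rw [AlgHom.toLinearMap_apply, ← rename_rename] at hp
  exact rename_injective _ (Fin.castLE_injective hrs) ((hι _ (hJP hp)).trans (map_zero _).symm)

theorem exists_linear_add_one_le_height_sup [Infinite K] {J : Ideal (MvPolynomial (Fin n) K)}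
    {h : ℕ} (hJ : (h : ℕ∞) ≤ J.height) (hn : h + 1 ≤ n) :
    ∃ l : MvPolynomial (Fin n) K, l.IsHomogeneous 1 ∧ l ≠ 0 ∧
      ((h + 1 : ℕ) : ℕ∞) ≤ (J ⊔ Ideal.span {l}).height := by
  let T := {P | P ∈ J.minimalPrimes ∧ ¬ (n : ℕ∞) ≤ P.height}
  have hT : T.Finite := (Ideal.finite_minimalPrimes_of_isNoetherianRing _ J).subset fun P hP ↦ hP.1
  obtain ⟨l, hl, hlT⟩ := exists_mem_forall_notMem_of_finite (K := K) (hT.insert ⊥)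
    (V := homogeneousSubmodule (Fin n) K 1) (by
      rintro P (rfl | ⟨hP, hPn⟩) hV
      · exact X_ne_zero (R := K) (⟨0, by omega⟩ : Fin n) (hV (isHomogeneous_X K _))
      · have := hP.isPrime
        exact hPn (le_height_of_X_mem fun i ↦ hV (isHomogeneous_X K i)))
  refine ⟨l, hl, fun h0 ↦ hlT ⊥ (T.mem_insert _) h0, ?_⟩
  refine add_one_le_height_sup_span_singleton hJ fun P hP hlP ↦ ?_
  have hnP : (n : ℕ∞) ≤ P.height := by
    by_contra hPn
    exact hlT P (Set.mem_insert_of_mem _ ⟨hP, hPn⟩) hlP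
  exact le_trans (by exact_mod_cast hn) hnP

theorem height_le_of_ne_top {J : Ideal (MvPolynomial (Fin n) K)} (hJ : J ≠ ⊤) :
    J.height ≤ n := by
  have h := Ideal.height_le_ringKrullDim_of_ne_top hJ
  rw [MvPolynomial.ringKrullDim_of_isNoetherianRing, ringKrullDim_eq_zero_of_field] at h
  have h' : ((J.height : ℕ∞) : WithBot ℕ∞) ≤ ((n : ℕ∞) : WithBot ℕ∞) := by simpa using h
  exact_mod_cast h'

theorem le_ker_constantCoeff {J : Ideal (MvPolynomial (Fin n) K)}
    (hJ : J.IsHomogeneous (homogeneousSubmodule (Fin n) K)) (hne : J ≠ ⊤) :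
    J ≤ RingHom.ker (constantCoeff (σ := Fin n) (R := K)) := by
  intro f hf
  by_contra h
  have h0 := homogeneousComponent_mem_of_mem hJ hf 0
  rw [homogeneousComponent_zero] at h0
  exact hne (Ideal.eq_top_of_isUnit_mem _ h0 (IsUnit.map C (isUnit_iff_ne_zero.2 h)))

theorem idealOfVars_le_radical {J : Ideal (MvPolynomial (Fin n) K)}
    (hJ : J.IsHomogeneous (homogeneousSubmodule (Fin n) K)) (hn : (n : ℕ∞) ≤ J.height) :
    idealOfVars (Fin n) K ≤ J.radical := by
  rw [Ideal.radical_eq_sInf]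
  refine le_sInf fun P ⟨hJP, hP⟩ ↦ ?_
  set P₀ := (P.homogeneousCore (homogeneousSubmodule (Fin n) K)).toIdeal
  have hP₀ : P₀.IsPrime := hP.homogeneousCore
  have hJP₀ : J ≤ P₀ := by
    rw [← hJ.toIdeal_homogeneousCore_eq_self]
    exact Ideal.homogeneousCore_mono _ hJP
  have hle : P₀ ≤ RingHom.ker (constantCoeff (σ := Fin n) (R := K)) :=
    le_ker_constantCoeff (HomogeneousIdeal.isHomogeneous _) hP₀.ne_top
  have heq : P₀ = RingHom.ker (constantCoeff (σ := Fin n) (R := K)) := by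
    by_contra hne
    have := RingHom.ker_isPrime (constantCoeff (σ := Fin n) (R := K))
    have h := (Ideal.height_add_one_le_of_lt_of_isPrime (hle.lt_of_ne hne)).trans
      (height_le_of_ne_top (RingHom.ker_ne_top _))
    have hn1 : ((n + 1 : ℕ) : ℕ∞) ≤ n := by
      push_cast
      grw [hn, Ideal.height_mono hJP₀, h]
    have : n + 1 ≤ n := by exact_mod_cast hn1
    omega
  have hP₀P : P₀ ≤ P := Ideal.toIdeal_homogeneousCore_le _ P
  refine le_trans ?_ hP₀P
  rw [heq, idealOfVars, Ideal.span_le]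
  rintro _ ⟨i, rfl⟩
  simp

theorem exists_hilbertFunction_eq_zero {J : Ideal (MvPolynomial (Fin n) K)}
    (hJ : J.IsHomogeneous (homogeneousSubmodule (Fin n) K)) (hn : (n : ℕ∞) ≤ J.height) :
    ∃ m, hilbertFunction K J m = 0 := by
  obtain ⟨m, hm⟩ := Ideal.exists_pow_le_of_le_radical_of_fg (idealOfVars_le_radical hJ hn)
    (idealOfVars_fg _ _)
  refine ⟨m, hilbertFunction_eq_zero_iff.2 fun p hp ↦ hm ?_⟩
  rw [mem_pow_idealOfVars_iff']
  intro x hx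
  by_contra hne
  have := hp hne
  rw [show (1 : Fin n → ℕ) = fun _ ↦ 1 from rfl, ← Finsupp.degree_eq_weight_one] at this
  omega

end PolynomialHeight

section HyperplaneSection

variable {K : Type*} [Field K] {n : ℕ}

/-- `φ` is the restriction of forms in `n + 1` variables to the hyperplane `l = 0`, in suitable
coordinates: it identifies the quotient by `l` with a polynomial ring in `n` variables. -/
structure IsRestriction (l : MvPolynomial (Fin (n + 1)) K)
    (φ : MvPolynomial (Fin (n + 1)) K →ₐ[K] MvPolynomial (Fin n) K) : Prop where
  surjective : Function.Surjective φ
  isHomogeneous : ∀ {p d}, p.IsHomogeneous d → (φ p).IsHomogeneous d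
  map_eq_zero_iff : ∀ {p}, φ p = 0 ↔ l ∣ p

theorem exists_associated_X_sub_rename {l : MvPolynomial (Fin (n + 1)) K} (hl : l.IsHomogeneous 1)
    (hl0 : l ≠ 0) :
    ∃ j, ∃ y : MvPolynomial (Fin n) K, y.IsHomogeneous 1 ∧
      Associated (X j - rename j.succAbove y) l := by
  rw [← mem_homogeneousSubmodule, homogeneousSubmodule_one_eq_span_X,
    Submodule.mem_span_range_iff_exists_fun] at hl
  obtain ⟨a, rfl⟩ := hl
  obtain ⟨j, hj⟩ : ∃ j, a j ≠ 0 := by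
    by_contra! h
    exact hl0 (by simp [h])
  let y : MvPolynomial (Fin n) K := -(C (a j)⁻¹ * ∑ i, C (a (j.succAbove i)) * X i)
  have hy : y.IsHomogeneous 1 :=
    (IsHomogeneous.C_mul (.sum _ _ _ fun i _ ↦ isHomogeneous_C_mul_X _ i) _).neg
  have hunit : IsUnit (C (a j) : MvPolynomial (Fin (n + 1)) K) := (isUnit_iff_ne_zero.2 hj).map C
  refine ⟨j, y, hy, hunit.unit, ?_⟩
  have hinv : (C (a j) * C (a j)⁻¹ : MvPolynomial (Fin (n + 1)) K) = 1 := by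
    rw [← C_mul, mul_inv_cancel₀ hj, C_1]
  rw [IsUnit.unit_spec, Fin.sum_univ_succAbove _ j]
  simp only [y, map_neg, map_mul, map_sum, algHom_C, algebraMap_eq, rename_X, smul_eq_C_mul]
  linear_combination (∑ i, C (a (j.succAbove i)) * X (j.succAbove i)) * hinv

theorem isRestriction_aeval_insertNth (j : Fin (n + 1)) {y : MvPolynomial (Fin n) K}
    (hy : y.IsHomogeneous 1) :
    IsRestriction (X j - rename j.succAbove y) (aeval (j.insertNth y X)) := by
  set φ : MvPolynomial (Fin (n + 1)) K →ₐ[K] MvPolynomial (Fin n) K := aeval (j.insertNth y X)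
  have hφψ (p) : φ (rename j.succAbove p) = p := by
    have : φ.comp (rename j.succAbove) = AlgHom.id K _ := by ext1 i; simp [φ]
    exact DFunLike.congr_fun this p
  have hψφ (p) : X j - rename j.succAbove y ∣ rename j.succAbove (φ p) - p := by
    let π := Ideal.Quotient.mkₐ K (Ideal.span {X j - rename j.succAbove y})
    have hπ : π.comp ((rename j.succAbove).comp φ) = π := by
      ext1 i
      rcases Fin.eq_self_or_eq_succAbove j i with rfl | ⟨i, rfl⟩
      · refine (Ideal.Quotient.eq.2 ?_).symm
        simp [φ]
      · simp [φ]
    exact Ideal.mem_span_singleton.1 (Ideal.Quotient.eq.1 (DFunLike.congr_fun hπ p))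
  refine ⟨fun p ↦ ⟨_, hφψ p⟩, fun {p d} hp ↦ ?_, fun {p} ↦ ⟨fun hp ↦ ?_, ?_⟩⟩
  · rw [← one_mul d]
    refine hp.aeval _ fun i ↦ ?_
    rcases Fin.eq_self_or_eq_succAbove j i with rfl | ⟨i, rfl⟩
    · simpa using hy
    · simpa using isHomogeneous_X K i
  · simpa [hp] using hψφ p
  · rintro ⟨q, rfl⟩
    rw [map_mul, map_sub, hφψ]
    simp [φ]

theorem exists_isRestriction {l : MvPolynomial (Fin (n + 1)) K} (hl : l.IsHomogeneous 1)
    (hl0 : l ≠ 0) : ∃ φ, IsRestriction l φ := by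
  obtain ⟨j, y, hy, hjy⟩ := exists_associated_X_sub_rename hl hl0
  have hφ := isRestriction_aeval_insertNth j hy
  exact ⟨_, hφ.surjective, hφ.isHomogeneous, hφ.map_eq_zero_iff.trans hjy.dvd_iff_dvd_left⟩

namespace IsRestriction

variable {l : MvPolynomial (Fin (n + 1)) K}
  {φ : MvPolynomial (Fin (n + 1)) K →ₐ[K] MvPolynomial (Fin n) K}
  {J : Ideal (MvPolynomial (Fin (n + 1)) K)}

theorem ker_eq (hφ : IsRestriction l φ) : RingHom.ker φ.toRingHom = Ideal.span {l} := by
  ext p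
  rw [Ideal.mem_span_singleton]
  exact hφ.map_eq_zero_iff

theorem mem_map_iff (hφ : IsRestriction l φ) {p : MvPolynomial (Fin (n + 1)) K} :
    φ p ∈ J.map φ ↔ p ∈ J ⊔ Ideal.span {l} := by
  rw [← hφ.ker_eq, ← Ideal.mem_comap, Ideal.comap_map_of_surjective' _ hφ.surjective]
  rfl

theorem hilbertFunction_sup_le (hφ : IsRestriction l φ)
    (J : Ideal (MvPolynomial (Fin (n + 1)) K)) (d : ℕ) :
    hilbertFunction K (J ⊔ Ideal.span {l}) d ≤ hilbertFunction K (J.map φ) d :=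
  hilbertFunction_le_of_linearMap φ.toLinearMap (fun _ ↦ hφ.isHomogeneous)
    fun _ _ ↦ hφ.mem_map_iff.1

theorem le_height_map (hφ : IsRestriction l φ) {h : ℕ}
    (hJ : ((h + 1 : ℕ) : ℕ∞) ≤ (J ⊔ Ideal.span {l}).height) : (h : ℕ∞) ≤ (J.map φ).height := by
  have h1 := hJ.trans (height_sup_span_singleton_le hφ.surjective hφ.ker_eq J)
  push_cast at h1
  exact (ENat.add_le_add_iff_right ENat.one_ne_top).1 h1

theorem isHomogeneous_map (hφ : IsRestriction l φ)
    (hJ : J.IsHomogeneous (homogeneousSubmodule (Fin (n + 1)) K)) :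
    (J.map φ).IsHomogeneous (homogeneousSubmodule (Fin n) K) := by
  obtain ⟨s, rfl⟩ := (Ideal.IsHomogeneous.iff_exists _ _).1 hJ
  rw [Ideal.map_span]
  refine Ideal.homogeneous_span _ _ ?_
  rintro _ ⟨_, ⟨⟨p, d, hp⟩, _, rfl⟩, rfl⟩
  exact ⟨d, hφ.isHomogeneous hp⟩

theorem hasGrowthLE (hφ : IsRestriction l φ) (hl : l.IsHomogeneous 1)
    (hJ : J.IsHomogeneous (homogeneousSubmodule (Fin (n + 1)) K)) {r : ℕ} {c : ℚ}
    (h : HasGrowthLE (hilbertFunction K (J.map φ)) r c) :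
    HasGrowthLE (hilbertFunction K J) (r + 1) c := by
  refine h.sum ((hilbertFunction_zero_le hJ hl one_ne_zero).trans (hφ.hilbertFunction_sup_le J 0))
    fun d ↦ ?_
  grw [← hφ.hilbertFunction_sup_le J (d + 1)]
  exact hilbertFunction_add_le hJ hl (fun p hp ↦ J.mul_mem_left l hp) d

end IsRestriction

theorem exists_isRestriction_le_height_map [Infinite K] {J : Ideal (MvPolynomial (Fin (n + 1)) K)}
    {h : ℕ} (hJ : (h : ℕ∞) ≤ J.height) (hn : h ≤ n) :
    ∃ l φ, l.IsHomogeneous 1 ∧ IsRestriction l φ ∧ (h : ℕ∞) ≤ (J.map φ).height := by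
  obtain ⟨l, hl, hl0, hh⟩ := exists_linear_add_one_le_height_sup hJ (Nat.succ_le_succ hn)
  obtain ⟨φ, hφ⟩ := exists_isRestriction hl hl0
  exact ⟨l, φ, hl, hφ, hφ.le_height_map hh⟩

end HyperplaneSection

section GeneratedInDegree

variable {K : Type*} [Field K] {n e : ℕ} {J : Ideal (MvPolynomial (Fin n) K)}

/-- The ideal `J` is generated by forms of degree `e`. -/
def IsGeneratedInDegree (e : ℕ) (J : Ideal (MvPolynomial (Fin n) K)) : Prop :=
  Ideal.span (gradedPart J e : Set (MvPolynomial (Fin n) K)) = J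

theorem isGeneratedInDegree_span {s : Set (MvPolynomial (Fin n) K)}
    (hs : ∀ p ∈ s, p.IsHomogeneous e) : IsGeneratedInDegree e (Ideal.span s) :=
  le_antisymm (Ideal.span_le.2 fun _ hp ↦ (mem_gradedPart.1 hp).2)
    (Ideal.span_mono fun p hp ↦ mem_gradedPart.2 ⟨hs p hp, Ideal.subset_span hp⟩)

namespace IsGeneratedInDegree

theorem isHomogeneous (hJ : IsGeneratedInDegree e J) :
    J.IsHomogeneous (homogeneousSubmodule (Fin n) K) := by
  rw [← hJ]
  exact Ideal.homogeneous_span _ _ fun p hp ↦ ⟨e, (mem_gradedPart.1 hp).1⟩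

theorem ne_top (hJ : IsGeneratedInDegree e J) (he : e ≠ 0) : J ≠ ⊤ := by
  refine ne_top_of_le_ne_top (RingHom.ker_ne_top (constantCoeff (σ := Fin n) (R := K))) ?_
  rw [← hJ, Ideal.span_le]
  exact fun p hp ↦ (mem_gradedPart.1 hp).1.coeff_eq_zero (by simpa using he.symm)

theorem exists_eq_span_range (hJ : IsGeneratedInDegree e J) {m : ℕ}
    (h : finrank K (gradedPart J e) ≤ m) :
    ∃ v : Fin m → MvPolynomial (Fin n) K, J = Ideal.span (Set.range v) := by
  obtain ⟨v, hv⟩ := exists_fin_span_range_eq (gradedPart J e) h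
  refine ⟨v, ?_⟩
  conv_lhs => rw [← hJ, ← hv]
  exact Submodule.span_span_of_tower K _ _

theorem height_le_finrank_gradedPart (hJ : IsGeneratedInDegree e J) (he : e ≠ 0) :
    J.height ≤ finrank K (gradedPart J e) := by
  obtain ⟨v, hv⟩ := hJ.exists_eq_span_range le_rfl
  calc J.height ≤ J.spanFinrank := Ideal.height_le_spanFinrank J (hJ.ne_top he)
    _ ≤ finrank K (gradedPart J e) := by
      have hspan := Submodule.spanFinrank_span_le_ncard_of_finite (R := MvPolynomial (Fin n) K)
        (Set.finite_range v)
      rw [Ideal.submodule_span_eq, ← hv] at hspan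
      exact_mod_cast hspan.trans ((Finite.card_range_le v).trans_eq (Nat.card_fin _))

theorem map {J : Ideal (MvPolynomial (Fin (n + 1)) K)} (hJ : IsGeneratedInDegree e J)
    {l : MvPolynomial (Fin (n + 1)) K}
    {φ : MvPolynomial (Fin (n + 1)) K →ₐ[K] MvPolynomial (Fin n) K} (hφ : IsRestriction l φ) :
    IsGeneratedInDegree e (J.map φ) := by
  rw [← hJ, Ideal.map_span]
  refine isGeneratedInDegree_span ?_
  rintro _ ⟨p, hp, rfl⟩
  exact hφ.isHomogeneous (mem_gradedPart.1 hp).1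

end IsGeneratedInDegree

end GeneratedInDegree

section Pairing

theorem exists_ne_zero_forall_pairing_eq_zero {K V W : Type*} [Field K] [AddCommGroup V]
    [Module K V] [FiniteDimensional K V] [AddCommGroup W] [Module K W] [FiniteDimensional K W]
    (B : V →ₗ[K] Dual K W) {U : Submodule K W} (hB : ∀ v, ∀ w ∈ U, B v w = 0)
    (h : finrank K W < finrank K V + finrank K U) : ∃ v ≠ 0, ∀ w, B v w = 0 := by
  have hrange : LinearMap.range B ≤ U.dualAnnihilator := by
    rintro _ ⟨v, rfl⟩
    exact (Submodule.mem_dualAnnihilator _).2 (hB v)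
  have hker : LinearMap.ker B ≠ ⊥ := by
    have h1 := Submodule.finrank_mono hrange
    have h2 := LinearMap.finrank_range_add_finrank_ker B
    have h3 := Subspace.finrank_add_finrank_dualAnnihilator_eq U
    rw [← Submodule.one_le_finrank_iff]
    omega
  obtain ⟨v, hv, hv0⟩ := Submodule.exists_mem_ne_zero_of_ne_bot hker
  exact ⟨v, hv0, LinearMap.congr_fun hv⟩

variable {K : Type*} [Field K] {n d : ℕ}

/- A nonzero functional on `(S/J)_{d+1}` induces a pairing of `S_1` with `(S/J)_d`; if `l` is in its
left kernel, then the functional also vanishes on `(J + (l))_{d+1}`. -/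
theorem hilbertFunction_succ_eq_zero {J : Ideal (MvPolynomial (Fin n) K)}
    (hJ : J.IsHomogeneous (homogeneousSubmodule (Fin n) K)) (hd : hilbertFunction K J d < n)
    (h : ∀ l : MvPolynomial (Fin n) K, l.IsHomogeneous 1 → l ≠ 0 →
      hilbertFunction K (J ⊔ Ideal.span {l}) (d + 1) = 0) :
    hilbertFunction K J (d + 1) = 0 := by
  rw [hilbertFunction_eq_zero_iff]
  intro p hp
  by_contra hpJ
  obtain ⟨f, hfp, hf⟩ := Submodule.exists_le_ker_of_notMem
    (fun hmem : p ∈ gradedPart J (d + 1) ↦ hpJ (mem_gradedPart.1 hmem).2)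
  let B : homogeneousSubmodule (Fin n) K 1 →ₗ[K] Dual K (homogeneousSubmodule (Fin n) K d) :=
    ((LinearMap.mul K (MvPolynomial (Fin n) K)).compr₂ f).domRestrict₁₂ _ _
  have hB : ∀ l, ∀ s ∈ (gradedPart J d).comap (homogeneousSubmodule (Fin n) K d).subtype,
      B l s = 0 := by
    intro l s hs
    refine hf (mem_gradedPart.2 ⟨?_, J.mul_mem_left _ (mem_gradedPart.1 hs).2⟩)
    rw [add_comm]
    exact l.2.mul s.2
  obtain ⟨l, hl0, hl⟩ := exists_ne_zero_forall_pairing_eq_zero B hB (by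
    have hle : gradedPart J d ≤ homogeneousSubmodule (Fin n) K d := inf_le_left
    rw [(Submodule.comapSubtypeEquivOfLe hle).finrank_eq, finrank_homogeneousSubmodule,
      finrank_homogeneousSubmodule, ← hilbertFunction_add_finrank_gradedPart J d,
      Nat.multichoose_one_right]
    omega)
  have hpl := hilbertFunction_eq_zero_iff.1 (h l l.2 (by simpa using hl0)) p hp
  obtain ⟨a, ha, s, hs, rfl⟩ :=
    exists_add_mul_of_mem_gradedPart_sup hJ l.2 (mem_gradedPart.2 ⟨hp, hpl⟩)
  have hls : (l * s).IsHomogeneous (d + 1) := add_comm d 1 ▸ l.2.mul hs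
  have hfa : f a = 0 := hf (mem_gradedPart.2 ⟨by simpa using hp.sub hls, ha⟩)
  exact hfp (by rw [map_add, hfa, zero_add]; exact hl ⟨s, hs⟩)

theorem hilbertFunction_succ_eq_zero_of_isRestriction {J : Ideal (MvPolynomial (Fin (n + 1)) K)}
    (hJ : J.IsHomogeneous (homogeneousSubmodule (Fin (n + 1)) K))
    (hd : hilbertFunction K J d ≤ n)
    (h : ∀ l φ, IsRestriction l φ → hilbertFunction K (J.map φ) (d + 1) = 0) :
    hilbertFunction K J (d + 1) = 0 := by
  refine hilbertFunction_succ_eq_zero hJ (Nat.lt_succ_of_le hd) fun l hl hl0 ↦ ?_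
  obtain ⟨φ, hφ⟩ := exists_isRestriction hl hl0
  exact Nat.le_zero.1 ((hφ.hilbertFunction_sup_le J _).trans_eq (h l φ hφ))

end Pairing

section Artinian

variable {K : Type*} [Field K]

theorem hilbertFunction_two_eq_zero_of_one_le_height {J : Ideal (MvPolynomial (Fin 1) K)}
    (hJ : IsGeneratedInDegree 2 J) (hh : 1 ≤ J.height) : hilbertFunction K J 2 = 0 := by
  have h1 : 1 ≤ finrank K (gradedPart J 2) := by
    exact_mod_cast hh.trans (hJ.height_le_finrank_gradedPart two_ne_zero)
  have h2 := hilbertFunction_add_finrank_gradedPart J 2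
  rw [show Nat.multichoose 1 2 = 1 by simp [Nat.multichoose_eq]] at h2
  omega

theorem hilbertFunction_two_le_one_of_two_le_height {J : Ideal (MvPolynomial (Fin 2) K)}
    (hJ : IsGeneratedInDegree 2 J) (hh : 2 ≤ J.height) : hilbertFunction K J 2 ≤ 1 := by
  have h1 : 2 ≤ finrank K (gradedPart J 2) := by
    exact_mod_cast hh.trans (hJ.height_le_finrank_gradedPart two_ne_zero)
  have h2 := hilbertFunction_add_finrank_gradedPart J 2
  rw [show Nat.multichoose 2 2 = 3 by simp [Nat.multichoose_eq]] at h2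
  omega

theorem hilbertFunction_three_eq_zero_of_two_le_height {J : Ideal (MvPolynomial (Fin 2) K)}
    (hJ : IsGeneratedInDegree 2 J) (hh : 2 ≤ J.height) : hilbertFunction K J 3 = 0 := by
  refine hilbertFunction_succ_eq_zero_of_isRestriction hJ.isHomogeneous
    (hilbertFunction_two_le_one_of_two_le_height hJ hh) fun l φ hφ ↦ ?_
  have h1 : 1 ≤ (J.map φ).height := by
    exact_mod_cast hφ.le_height_map (h := 1) (hh.trans (Ideal.height_mono le_sup_left))
  exact hilbertFunction_eq_zero_of_le
    (hilbertFunction_two_eq_zero_of_one_le_height (hJ.map hφ) h1) (by norm_num)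

theorem hilbertFunction_two_le_two_of_four_le_finrank {J : Ideal (MvPolynomial (Fin 3) K)}
    (h4 : 4 ≤ finrank K (gradedPart J 2)) : hilbertFunction K J 2 ≤ 2 := by
  have h2 := hilbertFunction_add_finrank_gradedPart J 2
  rw [show Nat.multichoose 3 2 = 6 by simp [Nat.multichoose_eq, Nat.choose]] at h2
  omega

theorem hilbertFunction_three_eq_zero_of_three_le_height {J : Ideal (MvPolynomial (Fin 3) K)}
    (hJ : IsGeneratedInDegree 2 J) (hh : 3 ≤ J.height) (h4 : 4 ≤ finrank K (gradedPart J 2)) :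
    hilbertFunction K J 3 = 0 := by
  refine hilbertFunction_succ_eq_zero_of_isRestriction hJ.isHomogeneous
    (hilbertFunction_two_le_two_of_four_le_finrank h4) fun l φ hφ ↦ ?_
  exact hilbertFunction_three_eq_zero_of_two_le_height (hJ.map hφ)
    (hφ.le_height_map (hh.trans (Ideal.height_mono le_sup_left)))

end Artinian

section Growth

variable {K : Type*} [Field K]

theorem hasGrowthLE_zero_of_hilbertFunction_three_eq_zero {n : ℕ} {c : ℚ}
    {J : Ideal (MvPolynomial (Fin n) K)} (h3 : hilbertFunction K J 3 = 0)
    (hc : 1 + n + hilbertFunction K J 2 ≤ c) : HasGrowthLE (hilbertFunction K J) 0 c := by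
  refine .of_eventually_zero (fun d hd ↦ hilbertFunction_eq_zero_of_le h3 hd) (le_trans ?_ hc)
  have h0 := hilbertFunction_add_finrank_gradedPart J 0
  have h1 := hilbertFunction_add_finrank_gradedPart J 1
  rw [Nat.multichoose_zero_right] at h0
  rw [Nat.multichoose_one_right] at h1
  have hsum : ∑ i ∈ Finset.range 3, hilbertFunction K J i ≤ 1 + n + hilbertFunction K J 2 := by
    simp only [Finset.sum_range_succ, Finset.sum_range_zero]
    omega
  exact_mod_cast hsum

theorem IsRestriction.exists_mul_mem_of_finrank_map_lt {n e : ℕ}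
    {l : MvPolynomial (Fin (n + 1)) K}
    {φ : MvPolynomial (Fin (n + 1)) K →ₐ[K] MvPolynomial (Fin n) K}
    {J : Ideal (MvPolynomial (Fin (n + 1)) K)} (hφ : IsRestriction l φ) (hl : l.IsHomogeneous 1)
    (hlt : finrank K (gradedPart (J.map φ) (e + 1)) < finrank K (gradedPart J (e + 1))) :
    ∃ m : MvPolynomial (Fin (n + 1)) K, m.IsHomogeneous e ∧ m ≠ 0 ∧ l * m ∈ J := by
  have hmap : (gradedPart J (e + 1)).map φ.toLinearMap ≤ gradedPart (J.map φ) (e + 1) := by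
    rintro _ ⟨p, hp, rfl⟩
    obtain ⟨hpe, hpJ⟩ := mem_gradedPart.1 hp
    exact mem_gradedPart.2 ⟨hφ.isHomogeneous hpe, Ideal.mem_map_of_mem φ hpJ⟩
  have hker : gradedPart J (e + 1) ⊓ LinearMap.ker φ.toLinearMap ≠ ⊥ := by
    intro hbot
    have h1 := finrank_map_add_finrank_inf_ker φ.toLinearMap (gradedPart J (e + 1))
    rw [hbot, finrank_bot] at h1
    have h2 := Submodule.finrank_mono hmap
    omega
  obtain ⟨q, ⟨hq, hφq⟩, hq0⟩ := Submodule.exists_mem_ne_zero_of_ne_bot hker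
  obtain ⟨hqe, hqJ⟩ := mem_gradedPart.1 hq
  have hql : q ∈ gradedPart (⊥ ⊔ Ideal.span {l}) (e + 1) := by
    rw [bot_sup_eq]
    exact mem_gradedPart.2 ⟨hqe, Ideal.mem_span_singleton.2 (hφ.map_eq_zero_iff.1 hφq)⟩
  obtain ⟨a, ha, m, hm, rfl⟩ :=
    exists_add_mul_of_mem_gradedPart_sup (Ideal.IsHomogeneous.bot _) hl hql
  obtain rfl := Ideal.mem_bot.1 ha
  rw [zero_add] at hq0 hqJ
  exact ⟨m, hm, right_ne_zero_of_mul hq0, hqJ⟩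

variable [Infinite K]

theorem exists_hasGrowthLE_of_le_height {n r h : ℕ} (hn : n = r + h)
    {J : Ideal (MvPolynomial (Fin n) K)} (hJ : J.IsHomogeneous (homogeneousSubmodule (Fin n) K))
    (hh : h ≤ J.height) : ∃ c, HasGrowthLE (hilbertFunction K J) r c := by
  induction r generalizing n with
  | zero =>
    obtain ⟨m, hm⟩ := exists_hilbertFunction_eq_zero hJ (by simpa [hn] using hh)
    exact ⟨_, .of_eventually_zero (fun d ↦ hilbertFunction_eq_zero_of_le hm) le_rfl⟩
  | succ r ih =>
    obtain rfl : n = r + h + 1 := by omega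
    obtain ⟨l, φ, hl, hφ, hφh⟩ := exists_isRestriction_le_height_map hh (h.le_add_left r)
    obtain ⟨c, hc⟩ := ih rfl (hφ.isHomogeneous_map hJ) hφh
    exact ⟨c, hφ.hasGrowthLE hl hJ hc⟩

theorem hasGrowthLE_four_of_two_le_height {r : ℕ} {J : Ideal (MvPolynomial (Fin (r + 2)) K)}
    (hJ : IsGeneratedInDegree 2 J) (hh : 2 ≤ J.height) :
    HasGrowthLE (hilbertFunction K J) r 4 := by
  induction r with
  | zero =>
    refine hasGrowthLE_zero_of_hilbertFunction_three_eq_zero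
      (hilbertFunction_three_eq_zero_of_two_le_height hJ hh) ?_
    have h2 : (hilbertFunction K J 2 : ℚ) ≤ 1 := by
      exact_mod_cast hilbertFunction_two_le_one_of_two_le_height hJ hh
    push_cast
    linarith
  | succ r ih =>
    obtain ⟨l, φ, hl, hφ, hφh⟩ :=
      exists_isRestriction_le_height_map (h := 2) hh (Nat.le_add_left 2 r)
    exact hφ.hasGrowthLE hl hJ.isHomogeneous (ih (hJ.map hφ) hφh)

theorem hasGrowthLE_four_sup_span_singleton {r : ℕ} {J : Ideal (MvPolynomial (Fin (r + 3)) K)}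
    (hJ : IsGeneratedInDegree 2 J) (hh : 3 ≤ J.height) {m : MvPolynomial (Fin (r + 3)) K}
    (hm : m.IsHomogeneous 1) (hm0 : m ≠ 0) :
    HasGrowthLE (hilbertFunction K (J ⊔ Ideal.span {m})) r 4 := by
  obtain ⟨φ, hφ⟩ := exists_isRestriction hm hm0
  have hφh : 2 ≤ (J.map φ).height :=
    hφ.le_height_map (h := 2) (hh.trans (Ideal.height_mono le_sup_left))
  exact (hasGrowthLE_four_of_two_le_height (hJ.map hφ) hφh).mono (hφ.hilbertFunction_sup_le J)
    le_rfl

/- Multiplication by `l` maps `(S/(J + (m)))(-1)` onto the kernel of `S/J → S/(J + (l))`, and the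
dimension of `S/(J + (l))` is too small to contribute to the multiplicity. -/
theorem hasGrowthLE_four_of_mul_mem {r : ℕ} {J : Ideal (MvPolynomial (Fin (r + 1 + 3)) K)}
    (hJ : IsGeneratedInDegree 2 J) (hh : 3 ≤ J.height) {l m : MvPolynomial (Fin (r + 1 + 3)) K}
    {φ : MvPolynomial (Fin (r + 1 + 3)) K →ₐ[K] MvPolynomial (Fin (r + 3)) K}
    (hl : l.IsHomogeneous 1) (hφ : IsRestriction l φ) (hφh : 3 ≤ (J.map φ).height)
    (hm : m.IsHomogeneous 1) (hm0 : m ≠ 0) (hlm : l * m ∈ J) :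
    HasGrowthLE (hilbertFunction K J) (r + 1) 4 := by
  obtain ⟨c, hc⟩ :=
    exists_hasGrowthLE_of_le_height (h := 3) rfl (hφ.isHomogeneous_map hJ.isHomogeneous) hφh
  refine (hasGrowthLE_four_sup_span_singleton hJ hh hm hm0).add
    (hc.mono (hφ.hilbertFunction_sup_le J) le_rfl)
    (hilbertFunction_zero_le hJ.isHomogeneous hl one_ne_zero)
    (hilbertFunction_add_le hJ.isHomogeneous hl ?_)
  have hcolon : J ⊔ Ideal.span {m} ≤ Submodule.colon J {l} := by
    refine sup_le Ideal.le_colon ((Ideal.span_singleton_le_iff_mem _).2 ?_)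
    rwa [Submodule.mem_colon_singleton, smul_eq_mul, mul_comm]
  intro p hp
  rw [mul_comm]
  exact Submodule.mem_colon_singleton.1 (hcolon hp)

theorem hasGrowthLE_six_of_three_le_height {r : ℕ} {J : Ideal (MvPolynomial (Fin (r + 3)) K)}
    (hJ : IsGeneratedInDegree 2 J) (hh : 3 ≤ J.height) (h4 : 4 ≤ finrank K (gradedPart J 2)) :
    HasGrowthLE (hilbertFunction K J) r 6 := by
  induction r with
  | zero =>
    refine hasGrowthLE_zero_of_hilbertFunction_three_eq_zero
      (hilbertFunction_three_eq_zero_of_three_le_height hJ hh h4) ?_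
    have h2 : (hilbertFunction K J 2 : ℚ) ≤ 2 := by
      exact_mod_cast hilbertFunction_two_le_two_of_four_le_finrank h4
    push_cast
    linarith
  | succ r ih =>
    obtain ⟨l, φ, hl, hφ, hφh⟩ :=
      exists_isRestriction_le_height_map (h := 3) hh (Nat.le_add_left 3 r)
    obtain h4' | h4' := le_or_gt 4 (finrank K (gradedPart (J.map φ) 2))
    · exact hφ.hasGrowthLE hl hJ.isHomogeneous (ih (hJ.map hφ) hφh h4')
    · obtain ⟨m, hm, hm0, hlm⟩ := hφ.exists_mul_mem_of_finrank_map_lt hl (h4'.trans_le h4)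
      exact (hasGrowthLE_four_of_mul_mem hJ hh hl hφ hφh hm hm0 hlm).mono (fun _ ↦ le_rfl)
        (by norm_num)

end Growth

section BaseChange

variable {k K : Type*} [Field k] [Field K] [Algebra k K] {n : ℕ}

theorem height_le_height_map_algebraMap (J : Ideal (MvPolynomial (Fin n) k)) :
    J.height ≤ (J.map (map (algebraMap k K))).height := by
  let _ : Algebra (MvPolynomial (Fin n) k) (MvPolynomial (Fin n) K) := algebraMvPolynomial
  have : Module.Flat (MvPolynomial (Fin n) k) (MvPolynomial (Fin n) K) :=
    .isBaseChange k _ K _ (Algebra.IsPushout.out (R := k) (R' := K))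
  exact height_le_height_map J

theorem finrank_span_map_algebraMap (V : Submodule k (MvPolynomial (Fin n) k)) :
    finrank K (Submodule.span K (map (algebraMap k K) '' (V : Set (MvPolynomial (Fin n) k)))) =
      finrank k V := by
  let e := (algebraTensorAlgEquiv (σ := Fin n) k K).toLinearEquiv
  have hmap : Submodule.span K (map (algebraMap k K) '' (V : Set (MvPolynomial (Fin n) k))) =
      (V.baseChange K).map e.toLinearMap := by
    rw [Submodule.baseChange_eq_span, Submodule.map_span, Submodule.map_coe, Set.image_image]
    congr! 2
    simp [e]
  rw [hmap, LinearEquiv.finrank_map_eq, ← (Submodule.toBaseChange.toLinearEquiv K V).finrank_eq,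
    finrank_baseChange]

theorem restrictScalars_map_algebraMap (J : Ideal (MvPolynomial (Fin n) k)) :
    (J.map (map (algebraMap k K))).restrictScalars K =
      Submodule.span K (map (algebraMap k K) '' (J : Set (MvPolynomial _ k))) := by
  rw [Ideal.map, Ideal.span,
    ← Submodule.span_smul_of_span_eq_top (basisMonomials (Fin n) K).span_eq]
  refine le_antisymm (Submodule.span_mono ?_) (Submodule.span_mono ?_)
  · rintro _ ⟨_, ⟨m, rfl⟩, _, ⟨p, hp, rfl⟩, rfl⟩
    exact ⟨monomial m 1 * p, J.mul_mem_left _ hp, by simp⟩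
  · exact fun p hp ↦ ⟨1, ⟨0, by simp⟩, p, hp, one_smul _ p⟩

theorem homogeneousComponent_map_algebraMap (d : ℕ) (p : MvPolynomial (Fin n) k) :
    homogeneousComponent d (map (algebraMap k K) p) =
      map (algebraMap k K) (homogeneousComponent d p) := by
  ext m
  simp only [coeff_map, coeff_homogeneousComponent]
  split_ifs <;> simp

theorem gradedPart_map_algebraMap {J : Ideal (MvPolynomial (Fin n) k)}
    (hJ : J.IsHomogeneous (homogeneousSubmodule (Fin n) k)) (d : ℕ) :
    gradedPart (J.map (map (algebraMap k K))) d =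
      Submodule.span K (map (algebraMap k K) '' (gradedPart J d : Set (MvPolynomial _ k))) := by
  refine le_antisymm (fun p hp ↦ ?_) (Submodule.span_le.2 ?_)
  · obtain ⟨hpd, hpJ⟩ := mem_gradedPart.1 hp
    rw [← Submodule.restrictScalars_mem K, restrictScalars_map_algebraMap] at hpJ
    have := Submodule.mem_map_of_mem (f := homogeneousComponent d) hpJ
    rw [Submodule.map_span, homogeneousComponent_eq_self hpd] at this
    refine Submodule.span_mono ?_ this
    rintro _ ⟨_, ⟨q, hq, rfl⟩, rfl⟩
    exact ⟨_, mem_gradedPart.2 ⟨homogeneousComponent_isHomogeneous d q,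
      homogeneousComponent_mem_of_mem hJ hq d⟩, (homogeneousComponent_map_algebraMap d q).symm⟩
  · rintro _ ⟨p, hp, rfl⟩
    obtain ⟨hpd, hpJ⟩ := mem_gradedPart.1 hp
    exact mem_gradedPart.2 ⟨hpd.map _, Ideal.mem_map_of_mem _ hpJ⟩

theorem finrank_gradedPart_map_algebraMap {J : Ideal (MvPolynomial (Fin n) k)}
    (hJ : J.IsHomogeneous (homogeneousSubmodule (Fin n) k)) (d : ℕ) :
    finrank K (gradedPart (J.map (map (algebraMap k K))) d) = finrank k (gradedPart J d) := by
  rw [gradedPart_map_algebraMap hJ, finrank_span_map_algebraMap]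

theorem hilbertFunction_map_algebraMap {J : Ideal (MvPolynomial (Fin n) k)}
    (hJ : J.IsHomogeneous (homogeneousSubmodule (Fin n) k)) (d : ℕ) :
    hilbertFunction K (J.map (map (algebraMap k K))) d = hilbertFunction k J d := by
  have h1 := hilbertFunction_add_finrank_gradedPart J d
  have h2 := hilbertFunction_add_finrank_gradedPart (J.map (map (algebraMap k K))) d
  rw [finrank_gradedPart_map_algebraMap hJ] at h2
  omega

theorem IsGeneratedInDegree.map_algebraMap {e : ℕ} {J : Ideal (MvPolynomial (Fin n) k)}
    (hJ : IsGeneratedInDegree e J) :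
    IsGeneratedInDegree e (J.map (MvPolynomial.map (algebraMap k K))) := by
  rw [← hJ, Ideal.map_span]
  refine isGeneratedInDegree_span ?_
  rintro _ ⟨p, hp, rfl⟩
  exact (mem_gradedPart.1 hp).1.map _

end BaseChange

section Multiplicity

variable {k : Type*} [Field k]

theorem hasGrowthLE_six_of_four_le_finrank {r : ℕ} {J : Ideal (MvPolynomial (Fin (r + 3)) k)}
    (hJ : IsGeneratedInDegree 2 J) (hh : 3 ≤ J.height) (h4 : 4 ≤ finrank k (gradedPart J 2)) :
    HasGrowthLE (hilbertFunction k J) r 6 := by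
  rw [← finrank_gradedPart_map_algebraMap (K := AlgebraicClosure k) hJ.isHomogeneous] at h4
  exact (hasGrowthLE_six_of_three_le_height hJ.map_algebraMap
    (hh.trans (height_le_height_map_algebraMap J)) h4).mono
    (fun d ↦ (hilbertFunction_map_algebraMap hJ.isHomogeneous d).ge) le_rfl

theorem hilbertSamuelMultiplicity_le_of_hasGrowthLE {n r : ℕ} {c : ℚ}
    {J : Ideal (MvPolynomial (Fin n) k)} (h : HasGrowthLE (hilbertFunction k J) r c) (hc : 0 ≤ c)
    (hr : ∀ d, r.multichoose d ≤ hilbertFunction k J d) : hilbertSamuelMultiplicity k J ≤ c := by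
  unfold hilbertSamuelMultiplicity
  split_ifs with hP
  · exact h.factorial_mul_leadingCoeff_le hc hP.choose_spec
      (le_natDegree_add_one_of_multichoose_le hP.choose_spec hr)
  · exact hc

theorem IsGeneratedInDegree.exists_eq_span_triple {n e : ℕ} {J : Ideal (MvPolynomial (Fin n) k)}
    (hJ : IsGeneratedInDegree e J) (h : finrank k (gradedPart J e) ≤ 3) :
    ∃ g₁ g₂ g₃, J = Ideal.span {g₁, g₂, g₃} := by
  obtain ⟨v, rfl⟩ := hJ.exists_eq_span_range h
  exact ⟨v 0, v 1, v 2, congrArg Ideal.span (by ext; simp [Fin.exists_fin_succ, eq_comm])⟩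

end Multiplicity

end QuadricIdeal

/-- If `I` is a homogeneous ideal of height `3` generated by quadrics
which is not a complete intersection (i.e. cannot be generated by `3` elements), then
`e(S/I) ≤ 6`. -/
theorem mult_le_six_of_not_CI (k : Type u) [Field k] (N : ℕ)
    (Q : Set (MvPolynomial (Fin N) k))
    (hQ : ∀ q ∈ Q, MvPolynomial.IsHomogeneous q 2)
    (I : Ideal (MvPolynomial (Fin N) k))
    (hI : I = Ideal.span Q)
    (hht : I.heightENat = 3)
    (hnotCI : ¬ ∃ g₁ g₂ g₃ : MvPolynomial (Fin N) k, I = Ideal.span {g₁, g₂, g₃}) :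
    hilbertSamuelMultiplicity k I ≤ 6 := by
  have hgen : QuadricIdeal.IsGeneratedInDegree 2 I :=
    hI ▸ QuadricIdeal.isGeneratedInDegree_span hQ
  rw [QuadricIdeal.heightENat_eq_height] at hht
  have hne : I ≠ ⊤ := hgen.ne_top two_ne_zero
  obtain ⟨r, rfl⟩ : ∃ r, N = r + 3 :=
    Nat.exists_eq_add_of_le' (by exact_mod_cast hht ▸ QuadricIdeal.height_le_of_ne_top hne)
  have hquadrics : 4 ≤ Module.finrank k (QuadricIdeal.gradedPart I 2) := by
    by_contra! hlt
    exact hnotCI (hgen.exists_eq_span_triple (Nat.le_of_lt_succ hlt))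
  exact QuadricIdeal.hilbertSamuelMultiplicity_le_of_hasGrowthLE
    (QuadricIdeal.hasGrowthLE_six_of_four_le_finrank hgen hht.ge hquadrics) (by norm_num)
    (QuadricIdeal.multichoose_le_hilbertFunction hht le_rfl)
end
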